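/- arXiv:1302.1336 — 4 statements merged into one kernel-verified Lean document; each statement's English description precedes it below -/
import Mathlib

section
/- Dimension bound on the negativity: let d ≤ D be positive natural numbers and let ρ be a bipartite quantum state on (Fin d) × (Fin D). Then the negativity satisfies N(ρ) ≤ (d − 1)/2. -/
open Matrix
open scoped Kronecker ComplexOrder

/-- Partial transpose on the first tensor factor. -/
def ptA {ιA ιB : Type*} (ρ : Matrix (ιA × ιB) (ιA × ιB) ℂ) : Matrix (ιA × ιB) (ιA × ιB) ℂ :=
  fun p q => ρ (q.1, p.2) (p.1, q.2)

/-- Sum of the absolute values of the negative eigenvalues of a Hermitian matrix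
(0 if the matrix is not Hermitian). -/
noncomputable def negEig {ι : Type*} [Fintype ι] [DecidableEq ι] (M : Matrix ι ι ℂ) : ℝ :=
  letI := Classical.dec M.IsHermitian
  if h : M.IsHermitian then ∑ i, max 0 (-(h.eigenvalues i)) else 0

/-!
Since the eigenvalues of `ρ^{T_A}` sum to `tr ρ`, twice the negativity is `‖ρ^{T_A}‖₁ - tr ρ`. The
trace norm is at most `tr X` for every `X` with `X ± ρ^{T_A} ≥ 0`, as one sees on the diagonal in an
eigenbasis, and `X = 1 ⊗ ρ_B`, of trace `d · tr ρ`, is such a matrix: with `E i k = |i⟩⟨k| ⊗ 1`,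
`1 ⊗ ρ_B = ∑ (E i k)ᴴ ρ (E i k)` and `ρ^{T_A} = ∑ (E i k)ᴴ ρ (E k i)`, so that
`2 (1 ⊗ ρ_B ± ρ^{T_A}) = ∑ (E i k ± E k i)ᴴ ρ (E i k ± E k i)`.
-/

section TraceNorm

variable {𝕜 ι : Type*} [RCLike 𝕜] [Fintype ι] [DecidableEq ι]

lemma abs_eigenvalues_le_re_diag_conj {M X : Matrix ι ι 𝕜} (hM : M.IsHermitian)
    (hsub : (X - M).PosSemidef) (hadd : (X + M).PosSemidef) (i : ι) :
    |hM.eigenvalues i| ≤ RCLike.re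
      (((hM.eigenvectorUnitary : Matrix ι ι 𝕜)ᴴ * X * hM.eigenvectorUnitary) i i) := by
  set U : Matrix ι ι 𝕜 := ↑hM.eigenvectorUnitary
  have hdiag : (Uᴴ * M * U) i i = hM.eigenvalues i := by
    have h := hM.conjStarAlgAut_star_eigenvectorUnitary
    rw [Unitary.conjStarAlgAut_star_apply] at h
    simpa [star_eq_conjTranspose] using congrFun₂ h i i
  have hsub_nonneg := (RCLike.le_iff_re_im.1
    ((hsub.conjTranspose_mul_mul_same U).diag_nonneg (i := i))).1
  have hadd_nonneg := (RCLike.le_iff_re_im.1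
    ((hadd.conjTranspose_mul_mul_same U).diag_nonneg (i := i))).1
  simp only [Matrix.mul_sub, Matrix.sub_mul, Matrix.mul_add, Matrix.add_mul, Matrix.sub_apply,
    Matrix.add_apply, hdiag, map_sub, map_add, map_zero, RCLike.ofReal_re]
    at hsub_nonneg hadd_nonneg
  exact abs_le.2 ⟨by linarith, by linarith⟩

theorem sum_abs_eigenvalues_le_re_trace {M X : Matrix ι ι 𝕜} (hM : M.IsHermitian)
    (hsub : (X - M).PosSemidef) (hadd : (X + M).PosSemidef) :
    ∑ i, |hM.eigenvalues i| ≤ RCLike.re X.trace := by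
  set U : Matrix ι ι 𝕜 := ↑hM.eigenvectorUnitary
  have hU : U * Uᴴ = 1 := Unitary.coe_mul_star_self hM.eigenvectorUnitary
  calc ∑ i, |hM.eigenvalues i|
      ≤ ∑ i, RCLike.re ((Uᴴ * X * U) i i) :=
        Finset.sum_le_sum fun i _ ↦ abs_eigenvalues_le_re_diag_conj hM hsub hadd i
    _ = RCLike.re (Uᴴ * X * U).trace := (map_sum RCLike.re _ _).symm
    _ = RCLike.re X.trace := by rw [trace_mul_cycle, hU, Matrix.one_mul]

theorem two_mul_negEig {M : Matrix ι ι ℂ} (hM : M.IsHermitian) :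
    2 * negEig M = ∑ i, |hM.eigenvalues i| - M.trace.re := by
  have htrace : M.trace.re = ∑ i, hM.eigenvalues i := by
    simp [hM.trace_eq_sum_eigenvalues]
  have hterm (x : ℝ) : 2 * max 0 (-x) = |x| - x := by
    rw [← max_zero_add_max_neg_zero_eq_abs_self x, max_comm 0]
    linarith [max_zero_sub_eq_self x]
  rw [negEig, dif_pos hM, htrace, Finset.mul_sum, ← Finset.sum_sub_distrib]
  exact Finset.sum_congr rfl fun i _ ↦ hterm _

end TraceNorm

theorem posSemidef_sum_add_smul_sum_involutive {𝕜 κ m n : Type*} [RCLike 𝕜]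
    [Fintype κ] [Fintype m] [Finite n] {ρ : Matrix m m 𝕜} (hρ : ρ.PosSemidef)
    (E : κ → Matrix m n 𝕜) {σ : κ → κ} (hσ : σ.Involutive) (ε : ℤˣ) :
    (∑ a, (E a)ᴴ * ρ * E a + ε • ∑ a, (E a)ᴴ * ρ * E (σ a)).PosSemidef := by
  have hdiag : ∑ a, (E (σ a))ᴴ * ρ * E (σ a) = ∑ a, (E a)ᴴ * ρ * E a :=
    hσ.bijective.sum_comp fun a ↦ (E a)ᴴ * ρ * E a
  have hcross : ∑ a, (E (σ a))ᴴ * ρ * E a = ∑ a, (E a)ᴴ * ρ * E (σ a) := by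
    simpa only [hσ _] using hσ.bijective.sum_comp fun a ↦ (E a)ᴴ * ρ * E (σ a)
  have hsum : ∑ a, (E a)ᴴ * ρ * E a + ε • ∑ a, (E a)ᴴ * ρ * E (σ a) =
      (1 / 2 : ℝ) • ∑ a, (E a + ε • E (σ a))ᴴ * ρ * (E a + ε • E (σ a)) := by
    rcases Int.units_eq_one_or ε with rfl | rfl <;>
    · simp only [Units.neg_smul, one_smul, conjTranspose_add, conjTranspose_neg, Matrix.add_mul,
        Matrix.neg_mul, Matrix.mul_add, Matrix.mul_neg, Finset.sum_add_distrib,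
        Finset.sum_neg_distrib, hdiag, hcross]
      module
  rw [hsum]
  exact (posSemidef_sum _ fun a _ ↦ hρ.conjTranspose_mul_mul_same _).smul (by norm_num)

section PartialTranspose

variable {ιA ιB R : Type*}

/-- The partial trace over the first tensor factor: the sum of the diagonal blocks. -/
def traceA [Fintype ιA] [AddCommMonoid R] (ρ : Matrix (ιA × ιB) (ιA × ιB) R) : Matrix ιB ιB R :=
  ∑ i, ρ.submatrix (Prod.mk i) (Prod.mk i)

lemma trace_traceA [Fintype ιA] [Fintype ιB] [AddCommMonoid R]
    (ρ : Matrix (ιA × ιB) (ιA × ιB) R) : (traceA ρ).trace = ρ.trace := by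
  simp only [traceA, trace_sum]
  exact (Fintype.sum_prod_type fun p ↦ ρ p p).symm

lemma trace_ptA [Fintype ιA] [Fintype ιB] (ρ : Matrix (ιA × ιB) (ιA × ιB) ℂ) :
    (ptA ρ).trace = ρ.trace := rfl

lemma isHermitian_ptA {ρ : Matrix (ιA × ιB) (ιA × ιB) ℂ} (hρ : ρ.IsHermitian) :
    (ptA ρ).IsHermitian :=
  Matrix.IsHermitian.ext fun _ _ ↦ hρ.apply _ _

section BlockUnit

variable [Fintype ιA] [Fintype ιB] [DecidableEq ιA] [DecidableEq ιB]

/-- The matrix unit `|i⟩⟨k| ⊗ 1` attached to the index pair `(i, k)`; sandwiching a matrix between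
two of these extracts one of its blocks. -/
def blockUnit (ιB R : Type*) [DecidableEq ιB] [Semiring R] (a : ιA × ιA) :
    Matrix (ιA × ιB) (ιA × ιB) R :=
  single a.1 a.2 1 ⊗ₖ 1

lemma conjTranspose_blockUnit_mul_mul_blockUnit [Semiring R] [StarRing R]
    (ρ : Matrix (ιA × ιB) (ιA × ιB) R) (a b : ιA × ιA) :
    (blockUnit ιB R a)ᴴ * ρ * blockUnit ιB R b =
      single a.2 b.2 1 ⊗ₖ ρ.submatrix (Prod.mk a.1) (Prod.mk b.1) := by
  ext p q
  by_cases ha : a.2 = p.1 <;> by_cases hb : b.2 = q.1 <;>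
    simp [blockUnit, mul_apply, single_apply, one_apply, Fintype.sum_prod_type,
      apply_ite star, ha, hb]

lemma sum_conjTranspose_blockUnit_mul_mul_blockUnit [Semiring R] [StarRing R]
    (ρ : Matrix (ιA × ιB) (ιA × ιB) R) :
    ∑ a, (blockUnit ιB R a)ᴴ * ρ * blockUnit ιB R a = 1 ⊗ₖ traceA ρ := by
  simp only [conjTranspose_blockUnit_mul_mul_blockUnit]
  ext p q
  simp [Matrix.sum_apply, Fintype.sum_prod_type, traceA, single_apply, one_apply, ite_and]

lemma sum_conjTranspose_blockUnit_mul_mul_blockUnit_swap (ρ : Matrix (ιA × ιB) (ιA × ιB) ℂ) :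
    ∑ a, (blockUnit ιB ℂ a)ᴴ * ρ * blockUnit ιB ℂ a.swap = ptA ρ := by
  simp only [conjTranspose_blockUnit_mul_mul_blockUnit]
  ext p q
  simp [Matrix.sum_apply, Fintype.sum_prod_type, ptA, single_apply, ite_and]

end BlockUnit

variable [Fintype ιA] [DecidableEq ιA]

theorem posSemidef_one_kronecker_traceA_add_smul_ptA [Finite ιB]
    {ρ : Matrix (ιA × ιB) (ιA × ιB) ℂ} (hρ : ρ.PosSemidef) (ε : ℤˣ) :
    (1 ⊗ₖ traceA ρ + ε • ptA ρ).PosSemidef := by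
  classical
  cases nonempty_fintype ιB
  simpa only [sum_conjTranspose_blockUnit_mul_mul_blockUnit,
    sum_conjTranspose_blockUnit_mul_mul_blockUnit_swap]
    using posSemidef_sum_add_smul_sum_involutive hρ (blockUnit ιB ℂ) Prod.swap_swap ε

theorem negativity_dimension_bound_general [Fintype ιB] [DecidableEq ιB]
    {ρ : Matrix (ιA × ιB) (ιA × ιB) ℂ} (hρ : ρ.PosSemidef) :
    negEig (ptA ρ) ≤ ((Fintype.card ιA : ℝ) - 1) / 2 * ρ.trace.re := by
  have hH : (ptA ρ).IsHermitian := isHermitian_ptA hρ.isHermitian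
  have hsub : (1 ⊗ₖ traceA ρ - ptA ρ).PosSemidef := by
    simpa [sub_eq_add_neg] using posSemidef_one_kronecker_traceA_add_smul_ptA hρ (-1)
  have hadd : (1 ⊗ₖ traceA ρ + ptA ρ).PosSemidef := by
    simpa using posSemidef_one_kronecker_traceA_add_smul_ptA hρ 1
  have hnorm : ∑ i, |hH.eigenvalues i| ≤ Fintype.card ιA * ρ.trace.re := by
    simpa [trace_kronecker, trace_traceA] using sum_abs_eigenvalues_le_re_trace hH hsub hadd
  have hneg : 2 * negEig (ptA ρ) = ∑ i, |hH.eigenvalues i| - ρ.trace.re :=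
    trace_ptA ρ ▸ two_mul_negEig hH
  linarith

end PartialTranspose

/-- dimension bound on the negativity. Any quantum state on
C^d ⊗ C^D with d ≤ D has negativity at most (d - 1)/2. -/
theorem negativity_dimension_bound (d D : ℕ) (hd : 0 < d) (hdD : d ≤ D)
    (ρ : Matrix (Fin d × Fin D) (Fin d × Fin D) ℂ)
    (hρ : ρ.PosSemidef) (htr : Matrix.trace ρ = 1) :
    negEig (ptA ρ) ≤ ((d : ℝ) - 1) / 2 := by
  simpa [htr] using negativity_dimension_bound_general hρ
end

section
/- Positivity of the moment matrix (property (i)): let ρ be a positive semidefinite complex matrix indexed by (ι_A × ι_B) × (ι_A × ι_B), and let A : κ_A → Matrix ι_A ι_A ℂ, B : κ_B → Matrix ι_B ι_B ℂ be finite families of matrices. Then the moment matrix χ[ρ] is positive semidefinite. -/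
open Matrix
open scoped Kronecker ComplexOrder

/-- The moment matrix of ρ with respect to the families A, B:
χ[ρ]((i,j),(k,l)) = tr[ρ · ((A k)ᴴ (A i) ⊗ (B l)ᴴ (B j))]. -/
noncomputable def momentMatrix {ιA ιB κA κB : Type*} [Fintype ιA] [Fintype ιB]
    (ρ : Matrix (ιA × ιB) (ιA × ιB) ℂ)
    (A : κA → Matrix ιA ιA ℂ) (B : κB → Matrix ιB ιB ℂ) :
    Matrix (κA × κB) (κA × κB) ℂ :=
  fun p q => Matrix.trace (ρ * (((A q.1)ᴴ * A p.1) ⊗ₖ ((B q.2)ᴴ * B p.2)))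

/-
Since `((A k)ᴴ * A i) ⊗ₖ ((B l)ᴴ * B j) = (A k ⊗ₖ B l)ᴴ * (A i ⊗ₖ B j)`, cyclicity of the trace
turns the entries of the moment matrix into `tr (M p * ρ * (M q)ᴴ)`, where `M (i, j) = A i ⊗ₖ B j`.
Expanding the trace over its diagonal terms writes this matrix as `∑ r, R r * ρ * (R r)ᴴ`, where
row `p` of `R r` is row `r` of `M p`. Infinite index types reduce to finite ones, since
positivity is tested on finitely supported vectors.
-/

section FiniteSubmatrices

variable {κ R : Type*} [Ring R] [PartialOrder R] [StarRing R]

theorem posSemidef_of_finite_submatrix {M : Matrix κ κ R}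
    (h : ∀ s : Finset κ, (M.submatrix ((↑) : s → κ) (↑)).PosSemidef) : M.PosSemidef := by
  classical
  refine ⟨Matrix.IsHermitian.ext fun i j ↦ ?_, fun x ↦ ?_⟩
  · exact (h {i, j}).isHermitian.apply ⟨i, by simp⟩ ⟨j, by simp⟩
  · have restrict_sum (f : κ → R → R) :
        (x.subtypeDomain (· ∈ x.support)).sum (fun i xi ↦ f i xi) = x.sum f :=
      Finsupp.sum_subtypeDomain_index fun _ hi ↦ hi
    calc 0 ≤ _ := (h x.support).2 (x.subtypeDomain (· ∈ x.support))
      _ = (x.subtypeDomain (· ∈ x.support)).sum fun i xi ↦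
            x.sum fun j xj ↦ star xi * M i j * xj :=
        Finsupp.sum_congr fun i _ ↦ restrict_sum fun j xj ↦ star (x i) * M i j * xj
      _ = x.sum fun i xi ↦ x.sum fun j xj ↦ star xi * M i j * xj :=
        restrict_sum fun i xi ↦ x.sum fun j xj ↦ star xi * M i j * xj

end FiniteSubmatrices

section WeightedGram

variable {κ m n R : Type*} [Fintype m] [Fintype n] [Ring R] [StarRing R]

/-- The Gram matrix of the family `M` for the sesquilinear form `(X, Y) ↦ tr (X * ρ * Yᴴ)`, of which
the moment matrix is an instance. The conjugated argument is placed last so that no cyclicity of the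
trace, hence no commutativity of `R`, enters. -/
def weightedGram (ρ : Matrix n n R) (M : κ → Matrix m n R) : Matrix κ κ R :=
  .of fun p q ↦ (M p * ρ * (M q)ᴴ).trace

theorem weightedGram_eq_sum (ρ : Matrix n n R) (M : κ → Matrix m n R) :
    weightedGram ρ M =
      ∑ r, (Matrix.of fun p ↦ M p r) * ρ * (Matrix.of fun p ↦ M p r)ᴴ := by
  ext p q
  rw [Matrix.sum_apply]
  rfl

theorem submatrix_weightedGram {κ' : Type*} (ρ : Matrix n n R) (M : κ → Matrix m n R)
    (f : κ' → κ) : (weightedGram ρ M).submatrix f f = weightedGram ρ (M ∘ f) :=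
  rfl

theorem weightedGram_posSemidef [PartialOrder R] [StarOrderedRing R] {ρ : Matrix n n R}
    (hρ : ρ.PosSemidef) (M : κ → Matrix m n R) : (weightedGram ρ M).PosSemidef := by
  refine posSemidef_of_finite_submatrix fun s ↦ ?_
  rw [submatrix_weightedGram, weightedGram_eq_sum]
  exact Matrix.posSemidef_sum _ fun r _ ↦ hρ.mul_mul_conjTranspose_same _

end WeightedGram

section MomentMatrix

variable {ιA ιB κA κB : Type*} [Fintype ιA] [Fintype ιB]

theorem momentMatrix_eq_weightedGram (ρ : Matrix (ιA × ιB) (ιA × ιB) ℂ)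
    (A : κA → Matrix ιA ιA ℂ) (B : κB → Matrix ιB ιB ℂ) :
    momentMatrix ρ A B = weightedGram ρ fun p : κA × κB ↦ A p.1 ⊗ₖ B p.2 := by
  ext p q
  calc (ρ * (((A q.1)ᴴ * A p.1) ⊗ₖ ((B q.2)ᴴ * B p.2))).trace
      = (ρ * (A q.1 ⊗ₖ B q.2)ᴴ * (A p.1 ⊗ₖ B p.2)).trace := by
        rw [Matrix.mul_kronecker_mul, ← Matrix.conjTranspose_kronecker, Matrix.mul_assoc]
    _ = ((A p.1 ⊗ₖ B p.2) * ρ * (A q.1 ⊗ₖ B q.2)ᴴ).trace := Matrix.trace_mul_cycle _ _ _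

theorem momentMatrix_posSemidef_general {ρ : Matrix (ιA × ιB) (ιA × ιB) ℂ} (hρ : ρ.PosSemidef)
    (A : κA → Matrix ιA ιA ℂ) (B : κB → Matrix ιB ιB ℂ) :
    (momentMatrix ρ A B).PosSemidef := by
  rw [momentMatrix_eq_weightedGram]
  exact weightedGram_posSemidef hρ _

end MomentMatrix

/-- property (i): if ρ is positive semidefinite then so is the moment
matrix χ[ρ]. -/
theorem momentMatrix_posSemidef
    {ιA ιB κA κB : Type*} [Fintype ιA] [Fintype ιB] [Fintype κA] [Fintype κB]
    [Nonempty ιA] [Nonempty ιB] [DecidableEq ιA] [DecidableEq ιB]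
    (ρ : Matrix (ιA × ιB) (ιA × ιB) ℂ) (hρ : ρ.PosSemidef)
    (A : κA → Matrix ιA ιA ℂ) (B : κB → Matrix ιB ιB ℂ) :
    (momentMatrix ρ A B).PosSemidef :=
  momentMatrix_posSemidef_general hρ A B
end

section
/- Device-independent genuine-negativity bound for the Svetlichny inequality: let ρ be a tripartite quantum state on ι_A × ι_B × ι_C, let A₁, A₂, B₁, B₂, C₁, C₂ be dichotomic observables on the respective factors, and let S be the Svetlichny value. Then for every decomposition ρ = σ_A + σ_B + σ_C into positive semidefinite Hermitian matrices σ_A, σ_B, σ_C, one has N_A(σ_A) + N_B(σ_B) + N_C(σ_C) ≥ (S − 4)/(8·√2 − 8). In particular, the genuine negativity of any state attaining Svetlichny value S is at least (S − 4)/(8·√2 − 8). -/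
open Matrix
open scoped Kronecker ComplexOrder

/-- Partial transpose on the second factor of a tripartite space. -/
def ptB3 {ιA ιB ιC : Type*} (σ : Matrix (ιA × ιB × ιC) (ιA × ιB × ιC) ℂ) :
    Matrix (ιA × ιB × ιC) (ιA × ιB × ιC) ℂ :=
  fun p q => σ (p.1, q.2.1, p.2.2) (q.1, p.2.1, q.2.2)

/-- Partial transpose on the third factor of a tripartite space. -/
def ptC3 {ιA ιB ιC : Type*} (σ : Matrix (ιA × ιB × ιC) (ιA × ιB × ιC) ℂ) :
    Matrix (ιA × ιB × ιC) (ιA × ιB × ιC) ℂ :=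
  fun p q => σ (p.1, p.2.1, q.2.2) (q.1, q.2.1, p.2.2)

/-- The Svetlichny expression for a tripartite state and dichotomic observables. -/
noncomputable def svetlichnyValue {ιA ιB ιC : Type*} [Fintype ιA] [Fintype ιB] [Fintype ιC]
    (ρ : Matrix (ιA × ιB × ιC) (ιA × ιB × ιC) ℂ)
    (A : Fin 2 → Matrix ιA ιA ℂ) (B : Fin 2 → Matrix ιB ιB ℂ) (C : Fin 2 → Matrix ιC ιC ℂ) : ℝ :=
  let E : Fin 2 → Fin 2 → Fin 2 → ℝ := fun x y z =>
    (Matrix.trace (ρ * ((A x) ⊗ₖ ((B y) ⊗ₖ (C z))))).re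
  E 0 0 0 + E 0 0 1 + E 0 1 0 + E 1 0 0 - E 0 1 1 - E 1 0 1 - E 1 1 0 - E 1 1 1

/-!
For a CHSH operator `K` with transposed counterpart `K'`, `K ^ 2 - 4` is the tensor product of the
commutators of the two parties, and each observable conjugates its party's commutator to the
negative. Partial transposition therefore turns `f (K ^ 2) + g (K ^ 2) * K` into
`f (8 - K' ^ 2) + g (K' ^ 2) * K'`. Written in this form, `|2 + K|` has partial transpose at most
`4`, while Tsirelson's bound gives `(2 + K')⁻ ≤ 2√2 - 2`. So `(2 + K')⁻` is a negativity witness: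
`tr (σ K) ≤ 2 tr σ + (4√2 - 4) N(σ^Γ)`. For each of the three bipartitions the Svetlichny operator
is a sum of two CHSH operators.
-/

section SpectralCalculus

open scoped MatrixOrder

variable {n : Type*} [Fintype n]

theorem re_trace_mul_nonneg {M N : Matrix n n ℂ} (hM : 0 ≤ M) (hN : 0 ≤ N) :
    0 ≤ (M * N).trace.re := by
  classical
  obtain ⟨Y, rfl⟩ := CStarAlgebra.nonneg_iff_eq_star_mul_self.mp hM
  have hY : 0 ≤ (Y * N * Yᴴ).trace :=
    ((nonneg_iff_posSemidef.mp hN).mul_mul_conjTranspose_same Y).trace_nonneg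
  rw [mul_assoc, trace_mul_comm]
  exact (Complex.le_def.mp hY).1

variable [DecidableEq n]

theorem trace_cfc {M : Matrix n n ℂ} (hM : M.IsHermitian) (f : ℝ → ℝ) :
    (cfc f M).trace = ∑ i, (f (hM.eigenvalues i) : ℂ) := by
  rw [hM.cfc_eq, IsHermitian.cfc, Unitary.conjStarAlgAut_apply, trace_mul_comm, ← mul_assoc,
    Unitary.coe_star_mul_self, one_mul, trace_diagonal]
  rfl

theorem negEig_eq_re_trace_negPart {M : Matrix n n ℂ} (hM : M.IsHermitian) :
    negEig M = (M⁻).trace.re := by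
  rw [negEig, dif_pos hM, CFC.negPart_def, cfcₙ_eq_cfc, trace_cfc hM, Complex.re_sum]
  simp only [Complex.ofReal_re, negPart_def, max_comm]

theorem neg_re_trace_mul_le_mul_negEig {τ M : Matrix n n ℂ} {c : ℝ} (hτ : τ.IsHermitian)
    (hM : 0 ≤ M) (hMc : M ≤ c • 1) : -(τ * M).trace.re ≤ c * negEig τ := by
  have hpos : 0 ≤ (τ⁺ * M).trace.re := re_trace_mul_nonneg (CFC.posPart_nonneg τ) hM
  have hneg : 0 ≤ (τ⁻ * (c • 1 - M)).trace.re :=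
    re_trace_mul_nonneg (CFC.negPart_nonneg τ) (sub_nonneg.mpr hMc)
  rw [mul_sub, mul_smul_comm, mul_one, trace_sub, trace_smul, Complex.sub_re, Complex.smul_re,
    smul_eq_mul, ← negEig_eq_re_trace_negPart hτ] at hneg
  rw [← CFC.posPart_sub_negPart τ hτ, sub_mul, trace_sub, Complex.sub_re,
    CFC.posPart_sub_negPart τ hτ]
  linarith

theorem negEig_eq_sum_roots_charpoly {M : Matrix n n ℂ} (hM : M.IsHermitian) :
    negEig M = (M.charpoly.roots.map fun z => max 0 (-z.re)).sum := by
  rw [negEig, dif_pos hM, hM.roots_charpoly_eq_eigenvalues, Multiset.map_map]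
  rfl

theorem negEig_submatrix_equiv {m : Type*} [Fintype m] [DecidableEq m] {M : Matrix n n ℂ}
    (hM : M.IsHermitian) (e : m ≃ n) : negEig (M.submatrix e e) = negEig M := by
  rw [negEig_eq_sum_roots_charpoly (hM.submatrix e), negEig_eq_sum_roots_charpoly hM,
    ← charpoly_reindex e.symm M]
  rfl

theorem exists_polynomial_eqOn {F : Type*} [Field F] {s : Set F} (hs : s.Finite) (f : F → F) :
    ∃ p : Polynomial F, s.EqOn p.eval f := by
  classical
  exact ⟨Lagrange.interpolate hs.toFinset id f, fun x hx =>
    Lagrange.eval_interpolate_at_node (v := id) f Function.injective_id.injOn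
      (hs.mem_toFinset.mpr hx)⟩

theorem cfc_eval_add_eval_mul_eq_aeval {M : Matrix n n ℂ} (hM : M.IsHermitian) {f g : ℝ → ℝ}
    {p q u v : Polynomial ℝ} (hp : ∀ x ∈ spectrum ℝ M, p.eval (u.eval x) = f (u.eval x))
    (hq : ∀ x ∈ spectrum ℝ M, q.eval (v.eval x) = g (v.eval x)) :
    cfc (fun x => f (u.eval x) + g (v.eval x) * x) M =
      Polynomial.aeval (Polynomial.aeval M u) p +
        Polynomial.aeval (Polynomial.aeval M v) q * M := by
  have hpq : (spectrum ℝ M).EqOn (fun x => f (u.eval x) + g (v.eval x) * x)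
      (p.comp u + q.comp v * Polynomial.X).eval := fun x hx => by
    simp only [Polynomial.eval_add, Polynomial.eval_mul, Polynomial.eval_comp, Polynomial.eval_X,
      hp x hx, hq x hx]
  refine (cfc_congr hpq).trans ((cfc_polynomial _ M hM).trans ?_)
  simp only [map_add, map_mul, Polynomial.aeval_comp, Polynomial.aeval_X]

theorem negPart_le_smul_one {M : Matrix n n ℂ} (hM : M.IsHermitian) {c : ℝ} (hc : 0 ≤ c)
    (h : -M ≤ c • 1) : M⁻ ≤ c • 1 := by
  have hM' : IsSelfAdjoint M := hM
  rw [neg_le, ← neg_smul, ← Algebra.algebraMap_eq_smul_one, algebraMap_le_iff_le_spectrum]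
    at h
  rw [CFC.negPart_def, cfcₙ_eq_cfc, ← Algebra.algebraMap_eq_smul_one]
  exact cfc_le_algebraMap (fun x : ℝ => x⁻) c M (fun x hx => max_le (neg_le.mp (h x hx)) hc)

theorem abs_cfc {M : Matrix n n ℂ} (hM : M.IsHermitian) (f : ℝ → ℝ) :
    CFC.abs (cfc f M) = cfc (fun x => |f x|) M := by
  have hM' : IsSelfAdjoint M := hM
  rw [CFC.abs_eq_cfc_norm _ (cfc_predicate f M),
    ← cfc_comp' _ f M (continuous_norm.continuousOn) (finite_real_spectrum.continuousOn f)]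
  rfl

end SpectralCalculus

theorem semiconjBy_lie_lie_swap {R : Type*} [Ring R] {a : R} (ha : a * a = 1) (b : R) :
    SemiconjBy a ⁅a, b⁆ ⁅b, a⁆ := by
  simp only [SemiconjBy, Ring.lie_def, mul_sub, sub_mul, mul_assoc, ha, mul_one]
  simp only [← mul_assoc, ha, one_mul]

theorem semiconjBy_lie_swap_lie {R : Type*} [Ring R] {a : R} (ha : a * a = 1) (b : R) :
    SemiconjBy a ⁅b, a⁆ ⁅a, b⁆ := by
  simpa only [Ring.lie_def, neg_sub] using (semiconjBy_lie_lie_swap ha b).neg_right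

section Polynomial

variable {R A B : Type*} [CommSemiring R] [Semiring A] [Semiring B] [Algebra R A] [Algebra R B]

theorem map_aeval_mul_of_map_pow_mul {L : A → B} (hL : IsLinearMap R L) {a c : A} {b d : B}
    (h : ∀ k : ℕ, L (a ^ k * c) = b ^ k * d) (p : Polynomial R) :
    L (Polynomial.aeval a p * c) = Polynomial.aeval b p * d := by
  rw [← hL.mk'_apply]
  simp only [Polynomial.aeval_eq_sum_range, Finset.sum_mul, map_sum, smul_mul_assoc, map_smul,
    IsLinearMap.mk'_apply, h]

theorem map_aeval_of_map_pow {L : A → B} (hL : IsLinearMap R L) {a : A} {b : B}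
    (h : ∀ k : ℕ, L (a ^ k) = b ^ k) (p : Polynomial R) :
    L (Polynomial.aeval a p) = Polynomial.aeval b p := by
  simpa only [mul_one] using map_aeval_mul_of_map_pow_mul hL (c := 1) (d := 1)
    (by simpa only [mul_one] using h) p

end Polynomial

section PartialTranspose

variable {ιA ιB : Type*}

theorem isLinearMap_ptA :
    IsLinearMap ℝ (ptA : Matrix (ιA × ιB) (ιA × ιB) ℂ → Matrix (ιA × ιB) (ιA × ιB) ℂ) :=
  ⟨fun _ _ => rfl, fun _ _ => rfl⟩

theorem ptA_kronecker (M : Matrix ιA ιA ℂ) (N : Matrix ιB ιB ℂ) : ptA (M ⊗ₖ N) = Mᵀ ⊗ₖ N := rfl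

theorem isHermitian_ptA_s16 {M : Matrix (ιA × ιB) (ιA × ιB) ℂ} (hM : M.IsHermitian) :
    (ptA M).IsHermitian :=
  IsHermitian.ext fun _ _ => hM.apply _ _

theorem trace_ptA_mul [Fintype ιA] [Fintype ιB] (M N : Matrix (ιA × ιB) (ιA × ιB) ℂ) :
    (ptA M * N).trace = (M * ptA N).trace := by
  simp only [trace, diag, mul_apply, ptA]
  rw [Fintype.sum_prod_type_right, Fintype.sum_prod_type_right]
  simp only [Fintype.sum_prod_type]
  exact Finset.sum_congr rfl fun _ _ => Finset.sum_comm

theorem ptA_one [DecidableEq ιA] [DecidableEq ιB] :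
    ptA (1 : Matrix (ιA × ιB) (ιA × ιB) ℂ) = 1 := by
  rw [← one_kronecker_one, ptA_kronecker, transpose_one]

end PartialTranspose

section Kronecker

variable {m n R : Type*}

theorem neg_kronecker [NonUnitalNonAssocRing R] (M : Matrix m m R) (N : Matrix n n R) :
    (-M) ⊗ₖ N = -(M ⊗ₖ N) :=
  ext fun _ _ => neg_mul _ _

theorem kronecker_neg [NonUnitalNonAssocRing R] (M : Matrix m m R) (N : Matrix n n R) :
    M ⊗ₖ (-N) = -(M ⊗ₖ N) :=
  ext fun _ _ => mul_neg _ _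

theorem kronecker_pow [CommSemiring R] [Fintype m] [Fintype n] [DecidableEq m] [DecidableEq n]
    (M : Matrix m m R) (N : Matrix n n R) (k : ℕ) : (M ⊗ₖ N) ^ k = (M ^ k) ⊗ₖ (N ^ k) := by
  induction k with
  | zero => simp only [pow_zero, one_kronecker_one]
  | succ k ih => simp only [pow_succ, ih, mul_kronecker_mul]

end Kronecker

theorem trace_submatrix_equiv {m n R : Type*} [Fintype m] [Fintype n] [AddCommMonoid R]
    (M : Matrix n n R) (e : m ≃ n) : (M.submatrix e e).trace = M.trace :=
  e.sum_comp fun i => M i i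

theorem transpose_mul_self_eq_one {n R : Type*} [Fintype n] [DecidableEq n] [CommSemiring R]
    {M : Matrix n n R} (h : M * M = 1) : Mᵀ * Mᵀ = 1 := by
  rw [← transpose_mul, h, transpose_one]

section CHSH

open Polynomial (X aeval)
open scoped MatrixOrder

variable {ιA ιB : Type*}

/-- A dichotomic observable: a Hermitian matrix with outcomes `±1`, encoded as squaring to `1`. -/
def IsDichotomic {ι : Type*} [Fintype ι] [DecidableEq ι] (M : Matrix ι ι ℂ) : Prop :=
  M.IsHermitian ∧ M * M = 1

/-- The Bell operator of the CHSH inequality, for the observables `P₀, P₁` of one party and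
`Q₀, Q₁` of the other. -/
def chshOp (P₀ P₁ : Matrix ιA ιA ℂ) (Q₀ Q₁ : Matrix ιB ιB ℂ) : Matrix (ιA × ιB) (ιA × ιB) ℂ :=
  P₀ ⊗ₖ (Q₀ + Q₁) + P₁ ⊗ₖ (Q₀ - Q₁)

theorem ptA_chshOp (P₀ P₁ : Matrix ιA ιA ℂ) (Q₀ Q₁ : Matrix ιB ιB ℂ) :
    ptA (chshOp P₀ P₁ Q₀ Q₁) = chshOp P₀ᵀ P₁ᵀ Q₀ Q₁ := rfl

theorem neg_chshOp (P₀ P₁ : Matrix ιA ιA ℂ) (Q₀ Q₁ : Matrix ιB ιB ℂ) :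
    -chshOp P₀ P₁ Q₀ Q₁ = chshOp (-P₀) (-P₁) Q₀ Q₁ := by
  rw [chshOp, chshOp, neg_kronecker, neg_kronecker, neg_add]

theorem isHermitian_chshOp {P₀ P₁ : Matrix ιA ιA ℂ} {Q₀ Q₁ : Matrix ιB ιB ℂ}
    (hP₀ : P₀.IsHermitian) (hP₁ : P₁.IsHermitian) (hQ₀ : Q₀.IsHermitian) (hQ₁ : Q₁.IsHermitian) :
    (chshOp P₀ P₁ Q₀ Q₁).IsHermitian := by
  simp only [IsHermitian, chshOp, conjTranspose_add, conjTranspose_kronecker, conjTranspose_sub,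
    hP₀.eq, hP₁.eq, hQ₀.eq, hQ₁.eq]

variable [Fintype ιA] [Fintype ιB] [DecidableEq ιA] [DecidableEq ιB]

namespace IsDichotomic

variable {M : Matrix ιA ιA ℂ} {N : Matrix ιB ιB ℂ}

theorem one : IsDichotomic (1 : Matrix ιA ιA ℂ) :=
  ⟨isHermitian_one, one_mul 1⟩

theorem neg (hM : IsDichotomic M) : IsDichotomic (-M) :=
  ⟨hM.1.neg, by rw [neg_mul_neg, hM.2]⟩

theorem transpose (hM : IsDichotomic M) : IsDichotomic Mᵀ :=
  ⟨hM.1.transpose, transpose_mul_self_eq_one hM.2⟩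

theorem kronecker (hM : IsDichotomic M) (hN : IsDichotomic N) : IsDichotomic (M ⊗ₖ N) :=
  ⟨by rw [IsHermitian, conjTranspose_kronecker, hM.1.eq, hN.1.eq],
    by rw [← mul_kronecker_mul, hM.2, hN.2, one_kronecker_one]⟩

end IsDichotomic

variable {P₀ P₁ : Matrix ιA ιA ℂ} {Q₀ Q₁ : Matrix ιB ιB ℂ}

theorem chshOp_sq_sub_four (hP₀ : P₀ * P₀ = 1) (hP₁ : P₁ * P₁ = 1) (hQ₀ : Q₀ * Q₀ = 1)
    (hQ₁ : Q₁ * Q₁ = 1) :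
    chshOp P₀ P₁ Q₀ Q₁ ^ 2 - 4 = ⁅P₁, P₀⁆ ⊗ₖ ⁅Q₀, Q₁⁆ := by
  simp only [chshOp, sq, add_mul, mul_add, ← mul_kronecker_mul, hP₀, hP₁, hQ₀, hQ₁, mul_neg,
    neg_mul, Ring.lie_def, sub_eq_add_neg, kronecker_add, add_kronecker, neg_kronecker,
    kronecker_neg, one_kronecker_one]
  rw [show (4 : Matrix (ιA × ιB) (ιA × ιB) ℂ) = 1 + 1 + 1 + 1 by norm_num]
  abel

theorem transpose_lie_pow_mul_left {P₀ : Matrix ιA ιA ℂ} (hP₀ : P₀ * P₀ = 1) (P₁ : Matrix ιA ιA ℂ)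
    (k : ℕ) : (⁅P₀, P₁⁆ ^ k * P₀)ᵀ = ⁅P₀ᵀ, P₁ᵀ⁆ ^ k * P₀ᵀ := by
  rw [transpose_mul, transpose_pow, lie_transpose,
    (semiconjBy_lie_swap_lie (transpose_mul_self_eq_one hP₀) _).pow_right k]

theorem transpose_lie_pow_mul_right {P₁ : Matrix ιA ιA ℂ} (hP₁ : P₁ * P₁ = 1) (P₀ : Matrix ιA ιA ℂ)
    (k : ℕ) : (⁅P₀, P₁⁆ ^ k * P₁)ᵀ = ⁅P₀ᵀ, P₁ᵀ⁆ ^ k * P₁ᵀ := by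
  rw [transpose_mul, transpose_pow, lie_transpose,
    (semiconjBy_lie_lie_swap (transpose_mul_self_eq_one hP₁) _).pow_right k]

theorem ptA_chshOp_sq_sub_four_pow (hP₀ : P₀ * P₀ = 1) (hP₁ : P₁ * P₁ = 1) (hQ₀ : Q₀ * Q₀ = 1)
    (hQ₁ : Q₁ * Q₁ = 1) (k : ℕ) :
    ptA ((chshOp P₀ P₁ Q₀ Q₁ ^ 2 - 4) ^ k) = (4 - chshOp P₀ᵀ P₁ᵀ Q₀ Q₁ ^ 2) ^ k := by
  have hswap : -⁅P₁ᵀ, P₀ᵀ⁆ = ⁅P₁, P₀⁆ᵀ := by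
    rw [lie_transpose, Ring.lie_def, Ring.lie_def, neg_sub]
  rw [← neg_sub (chshOp P₀ᵀ P₁ᵀ Q₀ Q₁ ^ 2), chshOp_sq_sub_four hP₀ hP₁ hQ₀ hQ₁,
    chshOp_sq_sub_four (transpose_mul_self_eq_one hP₀) (transpose_mul_self_eq_one hP₁) hQ₀ hQ₁,
    ← neg_kronecker, hswap, kronecker_pow, kronecker_pow, ptA_kronecker, transpose_pow]

theorem ptA_chshOp_sq_sub_four_pow_mul_chshOp (hP₀ : P₀ * P₀ = 1) (hP₁ : P₁ * P₁ = 1)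
    (hQ₀ : Q₀ * Q₀ = 1) (hQ₁ : Q₁ * Q₁ = 1) (k : ℕ) :
    ptA ((chshOp P₀ P₁ Q₀ Q₁ ^ 2 - 4) ^ k * chshOp P₀ P₁ Q₀ Q₁) =
      (chshOp P₀ᵀ P₁ᵀ Q₀ Q₁ ^ 2 - 4) ^ k * chshOp P₀ᵀ P₁ᵀ Q₀ Q₁ := by
  rw [chshOp_sq_sub_four hP₀ hP₁ hQ₀ hQ₁,
    chshOp_sq_sub_four (transpose_mul_self_eq_one hP₀) (transpose_mul_self_eq_one hP₁) hQ₀ hQ₁,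
    chshOp, chshOp, kronecker_pow, kronecker_pow, mul_add, mul_add,
    ← mul_kronecker_mul, ← mul_kronecker_mul, ← mul_kronecker_mul, ← mul_kronecker_mul,
    isLinearMap_ptA.map_add, ptA_kronecker, ptA_kronecker, transpose_lie_pow_mul_right hP₀,
    transpose_lie_pow_mul_left hP₁]

theorem chshOp_le_two_sqrt_two (hP₀ : IsDichotomic P₀) (hP₁ : IsDichotomic P₁)
    (hQ₀ : IsDichotomic Q₀) (hQ₁ : IsDichotomic Q₁) :
    chshOp P₀ P₁ Q₀ Q₁ ≤ (2 * √2) • (1 : Matrix (ιA × ιB) (ιA × ιB) ℂ) := by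
  have hcomm (P : Matrix ιA ιA ℂ) (Q : Matrix ιB ιB ℂ) :
      (P ⊗ₖ 1) * (1 ⊗ₖ Q) = (1 ⊗ₖ Q) * (P ⊗ₖ 1) := by
    simp only [← mul_kronecker_mul, mul_one, one_mul]
  have h := tsirelson_inequality (P₀ ⊗ₖ 1) (P₁ ⊗ₖ 1) (1 ⊗ₖ Q₀) (1 ⊗ₖ Q₁)
    { A₀_inv := (sq _).trans (hP₀.kronecker .one).2
      A₁_inv := (sq _).trans (hP₁.kronecker .one).2
      B₀_inv := (sq _).trans (IsDichotomic.one.kronecker hQ₀).2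
      B₁_inv := (sq _).trans (IsDichotomic.one.kronecker hQ₁).2
      A₀_sa := (hP₀.kronecker .one).1
      A₁_sa := (hP₁.kronecker .one).1
      B₀_sa := (IsDichotomic.one.kronecker hQ₀).1
      B₁_sa := (IsDichotomic.one.kronecker hQ₁).1
      A₀B₀_commutes := hcomm _ _
      A₀B₁_commutes := hcomm _ _
      A₁B₀_commutes := hcomm _ _
      A₁B₁_commutes := hcomm _ _ }
  have hsqrt : √2 ^ 3 = 2 * √2 := by rw [pow_succ, Real.sq_sqrt zero_le_two]
  simpa only [← mul_kronecker_mul, mul_one, one_mul, hsqrt, chshOp, kronecker_add, sub_eq_add_neg,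
    kronecker_neg, add_assoc] using h

theorem ptA_cfc_chshOp (hP₀ : IsDichotomic P₀) (hP₁ : IsDichotomic P₁)
    (hQ₀ : IsDichotomic Q₀) (hQ₁ : IsDichotomic Q₁) (f g : ℝ → ℝ) :
    ptA (cfc (fun x => f (x ^ 2) + g (x ^ 2) * x) (chshOp P₀ P₁ Q₀ Q₁)) =
      cfc (fun x => f (8 - x ^ 2) + g (x ^ 2) * x) (chshOp P₀ᵀ P₁ᵀ Q₀ Q₁) := by
  set K := chshOp P₀ P₁ Q₀ Q₁
  set K' := chshOp P₀ᵀ P₁ᵀ Q₀ Q₁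
  have hK : K.IsHermitian := isHermitian_chshOp hP₀.1 hP₁.1 hQ₀.1 hQ₁.1
  have hK' : K'.IsHermitian := isHermitian_chshOp hP₀.transpose.1 hP₁.transpose.1 hQ₀.1 hQ₁.1
  have hs : (spectrum ℝ K ∪ spectrum ℝ K').Finite :=
    finite_real_spectrum.union finite_real_spectrum
  obtain ⟨p, hp⟩ := exists_polynomial_eqOn
    ((hs.image fun x => x ^ 2 - 4).union (hs.image fun x => 4 - x ^ 2)) fun y => f (y + 4)
  obtain ⟨q, hq⟩ := exists_polynomial_eqOn (hs.image fun x => x ^ 2 - 4) fun y => g (y + 4)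
  have hcfc : cfc (fun x => f (x ^ 2) + g (x ^ 2) * x) K =
      aeval (K ^ 2 - 4) p + aeval (K ^ 2 - 4) q * K := by
    have h := cfc_eval_add_eval_mul_eq_aeval hK (f := fun y => f (y + 4))
      (g := fun y => g (y + 4)) (u := X ^ 2 - 4) (v := X ^ 2 - 4)
      (fun x hx => hp (.inl ⟨x, .inl hx, by simp⟩)) fun x hx => hq ⟨x, .inl hx, by simp⟩
    simpa [map_ofNat] using h
  have hcfc' : cfc (fun x => f (8 - x ^ 2) + g (x ^ 2) * x) K' =
      aeval (4 - K' ^ 2) p + aeval (K' ^ 2 - 4) q * K' := by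
    have h := cfc_eval_add_eval_mul_eq_aeval hK' (f := fun y => f (y + 4))
      (g := fun y => g (y + 4)) (u := 4 - X ^ 2) (v := X ^ 2 - 4)
      (fun x hx => hp (.inr ⟨x, .inr hx, by simp⟩)) fun x hx => hq ⟨x, .inr hx, by simp⟩
    have hshift (x : ℝ) : 4 - x ^ 2 + 4 = 8 - x ^ 2 := by ring
    simpa [hshift, map_ofNat] using h
  rw [hcfc, hcfc', isLinearMap_ptA.map_add,
    map_aeval_of_map_pow isLinearMap_ptA (ptA_chshOp_sq_sub_four_pow hP₀.2 hP₁.2 hQ₀.2 hQ₁.2),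
    map_aeval_mul_of_map_pow_mul isLinearMap_ptA
      (ptA_chshOp_sq_sub_four_pow_mul_chshOp hP₀.2 hP₁.2 hQ₀.2 hQ₁.2)]

-- Even and odd part of `|2 + x|`; the value `2 / 0 = 0` is harmless, being multiplied by `x = 0`.
theorem abs_two_add_eq_max_add_min_mul (x : ℝ) :
    |2 + x| = max 2 √(x ^ 2) + min 1 (2 / √(x ^ 2)) * x := by
  rw [Real.sqrt_sq_eq_abs]
  rcases eq_or_ne x 0 with rfl | hx
  · norm_num
  have hx' : 0 < |x| := abs_pos.mpr hx
  rcases le_total |x| 2 with h | h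
  · rw [max_eq_left h, min_eq_left ((one_le_div hx').mpr h), one_mul,
      abs_of_nonneg (by linarith [neg_abs_le x])]
  · rw [max_eq_right h, min_eq_right ((div_le_one hx').mpr h)]
    rcases abs_cases x with ⟨hab, hx0⟩ | ⟨hab, hx0⟩
    · rw [hab] at h hx' ⊢
      rw [div_mul_cancel₀ _ hx, abs_of_nonneg (by linarith), add_comm]
    · rw [hab] at h hx' ⊢
      rw [div_neg, neg_mul, div_mul_cancel₀ _ hx, abs_of_nonpos (by linarith)]
      ring

theorem max_add_min_mul_le_four (x : ℝ) :
    max 2 √(8 - x ^ 2) + min 1 (2 / √(x ^ 2)) * x ≤ 4 := by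
  rw [Real.sqrt_sq_eq_abs, ← le_sub_iff_add_le, max_le_iff]
  rcases le_total |x| 2 with h | h
  · have hmin : min 1 (2 / |x|) * x = x := by
      rcases eq_or_ne x 0 with rfl | hx
      · exact mul_zero _
      · rw [min_eq_left ((one_le_div (abs_pos.mpr hx)).mpr h), one_mul]
    have hx2 : x ≤ 2 := (le_abs_self x).trans h
    rw [hmin, Real.sqrt_le_iff]
    exact ⟨by linarith, by linarith, by nlinarith [sq_nonneg (x - 2)]⟩
  · have hsqrt : √(8 - x ^ 2) ≤ 2 := by
      rw [Real.sqrt_le_iff]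
      exact ⟨zero_le_two, by nlinarith [sq_abs x]⟩
    have hmin : min 1 (2 / |x|) * x ≤ 2 := calc
      min 1 (2 / |x|) * x ≤ min 1 (2 / |x|) * |x| := by gcongr; exact le_abs_self x
      _ ≤ 2 / |x| * |x| := by gcongr; exact min_le_right _ _
      _ = 2 := div_mul_cancel₀ _ (by linarith : 0 < |x|).ne'
    constructor <;> linarith

theorem ptA_cfcAbs_two_add_chshOp_le (hP₀ : IsDichotomic P₀) (hP₁ : IsDichotomic P₁)
    (hQ₀ : IsDichotomic Q₀) (hQ₁ : IsDichotomic Q₁) :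
    ptA (CFC.abs (2 + chshOp P₀ P₁ Q₀ Q₁)) ≤ 4 := by
  have hK : IsSelfAdjoint (chshOp P₀ P₁ Q₀ Q₁) := isHermitian_chshOp hP₀.1 hP₁.1 hQ₀.1 hQ₁.1
  have hK' : IsSelfAdjoint (chshOp P₀ᵀ P₁ᵀ Q₀ Q₁) :=
    isHermitian_chshOp hP₀.transpose.1 hP₁.transpose.1 hQ₀.1 hQ₁.1
  have hcfc : 2 + chshOp P₀ P₁ Q₀ Q₁ = cfc (fun x : ℝ => 2 + x) (chshOp P₀ P₁ Q₀ Q₁) := by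
    rw [cfc_const_add 2 (fun x : ℝ => x) _ continuousOn_id hK, cfc_id' ℝ _ hK, map_ofNat]
  rw [hcfc, abs_cfc hK,
    funext abs_two_add_eq_max_add_min_mul,
    ptA_cfc_chshOp hP₀ hP₁ hQ₀ hQ₁ (fun y => max 2 √y) fun y => min 1 (2 / √y)]
  simpa only [map_ofNat] using cfc_le_algebraMap _ 4 _ (fun x _ => max_add_min_mul_le_four x)
    (finite_real_spectrum.continuousOn _)

theorem isHermitian_two_add_chshOp (hP₀ : IsDichotomic P₀) (hP₁ : IsDichotomic P₁)
    (hQ₀ : IsDichotomic Q₀) (hQ₁ : IsDichotomic Q₁) : (2 + chshOp P₀ P₁ Q₀ Q₁).IsHermitian := by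
  rw [← one_add_one_eq_two]
  exact (isHermitian_one.add isHermitian_one).add (isHermitian_chshOp hP₀.1 hP₁.1 hQ₀.1 hQ₁.1)

theorem negPart_two_add_chshOp_le (hP₀ : IsDichotomic P₀) (hP₁ : IsDichotomic P₁)
    (hQ₀ : IsDichotomic Q₀) (hQ₁ : IsDichotomic Q₁) :
    (2 + chshOp P₀ P₁ Q₀ Q₁)⁻ ≤ (2 * √2 - 2) • 1 := by
  refine negPart_le_smul_one (isHermitian_two_add_chshOp hP₀ hP₁ hQ₀ hQ₁)
    (by linarith [Real.one_le_sqrt.mpr one_le_two]) ?_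
  have htsirelson := chshOp_le_two_sqrt_two hP₀.neg hP₁.neg hQ₀ hQ₁
  rw [← neg_chshOp] at htsirelson
  rw [neg_add_rev, sub_smul, ofNat_smul_eq_nsmul, nsmul_one, Nat.cast_ofNat, ← sub_eq_add_neg]
  exact sub_le_sub_right htsirelson 2

theorem chshOp_add_two_smul_ptA_negPart_le (hP₀ : IsDichotomic P₀) (hP₁ : IsDichotomic P₁)
    (hQ₀ : IsDichotomic Q₀) (hQ₁ : IsDichotomic Q₁) :
    chshOp P₀ P₁ Q₀ Q₁ + (2 : ℝ) • ptA (2 + chshOp P₀ᵀ P₁ᵀ Q₀ Q₁)⁻ ≤ 2 := by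
  have habs : CFC.abs (2 + chshOp P₀ᵀ P₁ᵀ Q₀ Q₁) =
      1 + 1 + (chshOp P₀ᵀ P₁ᵀ Q₀ Q₁ + (2 : ℝ) • (2 + chshOp P₀ᵀ P₁ᵀ Q₀ Q₁)⁻) := by
    rw [ofNat_smul_eq_nsmul, ← CFC.abs_sub_self _
      (isHermitian_two_add_chshOp hP₀.transpose hP₁.transpose hQ₀ hQ₁), one_add_one_eq_two]
    abel
  have hle := ptA_cfcAbs_two_add_chshOp_le hP₀.transpose hP₁.transpose hQ₀ hQ₁
  rw [habs, isLinearMap_ptA.map_add, isLinearMap_ptA.map_add, isLinearMap_ptA.map_add,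
    isLinearMap_ptA.map_smul, ptA_one, ptA_chshOp, transpose_transpose, transpose_transpose,
    one_add_one_eq_two, ← le_sub_iff_add_le'] at hle
  exact hle.trans_eq (by norm_num)

theorem re_trace_mul_chshOp_le {σ : Matrix (ιA × ιB) (ιA × ιB) ℂ} (hσ : σ.PosSemidef)
    (hP₀ : IsDichotomic P₀) (hP₁ : IsDichotomic P₁)
    (hQ₀ : IsDichotomic Q₀) (hQ₁ : IsDichotomic Q₁) :
    (σ * chshOp P₀ P₁ Q₀ Q₁).trace.re ≤
      2 * σ.trace.re + (4 * √2 - 4) * negEig (ptA σ) := by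
  set N := (2 + chshOp P₀ᵀ P₁ᵀ Q₀ Q₁)⁻
  have hN : -(ptA σ * N).trace.re ≤ (2 * √2 - 2) * negEig (ptA σ) :=
    neg_re_trace_mul_le_mul_negEig (isHermitian_ptA_s16 hσ.1) (CFC.negPart_nonneg _)
      (negPart_two_add_chshOp_le hP₀.transpose hP₁.transpose hQ₀ hQ₁)
  have hwitness : 0 ≤ (σ * (2 - (chshOp P₀ P₁ Q₀ Q₁ + (2 : ℝ) • ptA N))).trace.re :=
    re_trace_mul_nonneg (nonneg_iff_posSemidef.mpr hσ)
      (sub_nonneg.mpr (chshOp_add_two_smul_ptA_negPart_le hP₀ hP₁ hQ₀ hQ₁))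
  rw [mul_sub, mul_add, mul_smul_comm, mul_two, trace_sub, trace_add, trace_add, trace_smul,
    ← trace_ptA_mul, Complex.sub_re, Complex.add_re, Complex.add_re, Complex.smul_re,
    smul_eq_mul] at hwitness
  linarith

end CHSH

section Cyclic

variable {ιA ιB ιC : Type*}

/-- The cyclic relabelling of a tripartite index set, which moves the first party to the last
place; it reduces the statements about the second and the third party to the first one. -/
def cyclicEquiv (ιA ιB ιC : Type*) : ιB × ιC × ιA ≃ ιA × ιB × ιC :=
  (Equiv.prodAssoc ιB ιC ιA).symm.trans (Equiv.prodComm (ιB × ιC) ιA)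

theorem ptA_submatrix_cyclicEquiv (σ : Matrix (ιA × ιB × ιC) (ιA × ιB × ιC) ℂ) :
    ptA (σ.submatrix (cyclicEquiv ιA ιB ιC) (cyclicEquiv ιA ιB ιC)) =
      (ptB3 σ).submatrix (cyclicEquiv ιA ιB ιC) (cyclicEquiv ιA ιB ιC) := rfl

theorem ptB3_submatrix_cyclicEquiv (σ : Matrix (ιA × ιB × ιC) (ιA × ιB × ιC) ℂ) :
    ptB3 (σ.submatrix (cyclicEquiv ιA ιB ιC) (cyclicEquiv ιA ιB ιC)) =
      (ptC3 σ).submatrix (cyclicEquiv ιA ιB ιC) (cyclicEquiv ιA ιB ιC) := rfl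

theorem isHermitian_ptB3 {σ : Matrix (ιA × ιB × ιC) (ιA × ιB × ιC) ℂ} (hσ : σ.IsHermitian) :
    (ptB3 σ).IsHermitian :=
  IsHermitian.ext fun _ _ => hσ.apply _ _

theorem isHermitian_ptC3 {σ : Matrix (ιA × ιB × ιC) (ιA × ιB × ιC) ℂ} (hσ : σ.IsHermitian) :
    (ptC3 σ).IsHermitian :=
  IsHermitian.ext fun _ _ => hσ.apply _ _

theorem kronecker_submatrix_cyclicEquiv (A : Matrix ιA ιA ℂ) (B : Matrix ιB ιB ℂ)
    (C : Matrix ιC ιC ℂ) :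
    (A ⊗ₖ (B ⊗ₖ C)).submatrix (cyclicEquiv ιA ιB ιC) (cyclicEquiv ιA ιB ιC) =
      B ⊗ₖ (C ⊗ₖ A) :=
  ext fun _ _ => (mul_comm _ _).trans (mul_assoc _ _ _)

end Cyclic

section Svetlichny

variable {ιA ιB ιC : Type*} [Fintype ιA] [Fintype ιB] [Fintype ιC]

theorem svetlichnyValue_add (ρ σ : Matrix (ιA × ιB × ιC) (ιA × ιB × ιC) ℂ)
    (A : Fin 2 → Matrix ιA ιA ℂ) (B : Fin 2 → Matrix ιB ιB ℂ) (C : Fin 2 → Matrix ιC ιC ℂ) :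
    svetlichnyValue (ρ + σ) A B C = svetlichnyValue ρ A B C + svetlichnyValue σ A B C := by
  simp only [svetlichnyValue, add_mul, trace_add, Complex.add_re]
  ring

theorem svetlichnyValue_eq_re_trace_mul_chshOp_add
    (σ : Matrix (ιA × ιB × ιC) (ιA × ιB × ιC) ℂ)
    (A : Fin 2 → Matrix ιA ιA ℂ) (B : Fin 2 → Matrix ιB ιB ℂ) (C : Fin 2 → Matrix ιC ιC ℂ) :
    svetlichnyValue σ A B C =
      (σ * chshOp (A 0) (A 1) (B 0 ⊗ₖ C 0) (B 0 ⊗ₖ C 1)).trace.re +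
        (σ * chshOp (-A 1) (A 0) (B 1 ⊗ₖ C 0) (B 1 ⊗ₖ C 1)).trace.re := by
  simp only [svetlichnyValue, chshOp, sub_eq_add_neg, kronecker_add, kronecker_neg, neg_kronecker,
    mul_add, mul_neg, trace_add, trace_neg, Complex.add_re, Complex.neg_re]
  ring

theorem svetlichnyValue_submatrix_cyclicEquiv (σ : Matrix (ιA × ιB × ιC) (ιA × ιB × ιC) ℂ)
    (A : Fin 2 → Matrix ιA ιA ℂ) (B : Fin 2 → Matrix ιB ιB ℂ) (C : Fin 2 → Matrix ιC ιC ℂ) :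
    svetlichnyValue (σ.submatrix (cyclicEquiv ιA ιB ιC) (cyclicEquiv ιA ιB ιC)) B C A =
      svetlichnyValue σ A B C := by
  have htrace (x y z : Fin 2) :
      (σ.submatrix (cyclicEquiv ιA ιB ιC) (cyclicEquiv ιA ιB ιC) *
        (B y ⊗ₖ (C z ⊗ₖ A x))).trace = (σ * (A x ⊗ₖ (B y ⊗ₖ C z))).trace := by
    rw [← kronecker_submatrix_cyclicEquiv, submatrix_mul_equiv, trace_submatrix_equiv]
  simp only [svetlichnyValue, htrace]
  ring

variable [DecidableEq ιA] [DecidableEq ιB] [DecidableEq ιC]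

theorem svetlichnyValue_le_ptA {σ : Matrix (ιA × ιB × ιC) (ιA × ιB × ιC) ℂ} (hσ : σ.PosSemidef)
    {A : Fin 2 → Matrix ιA ιA ℂ} {B : Fin 2 → Matrix ιB ιB ℂ} {C : Fin 2 → Matrix ιC ιC ℂ}
    (hA : ∀ x, IsDichotomic (A x)) (hB : ∀ y, IsDichotomic (B y)) (hC : ∀ z, IsDichotomic (C z)) :
    svetlichnyValue σ A B C ≤ 4 * σ.trace.re + (8 * √2 - 8) * negEig (ptA σ) := by
  rw [svetlichnyValue_eq_re_trace_mul_chshOp_add]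
  linarith [re_trace_mul_chshOp_le hσ (hA 0) (hA 1) ((hB 0).kronecker (hC 0))
      ((hB 0).kronecker (hC 1)),
    re_trace_mul_chshOp_le hσ (hA 1).neg (hA 0) ((hB 1).kronecker (hC 0))
      ((hB 1).kronecker (hC 1))]

theorem svetlichnyValue_le_ptB3 {σ : Matrix (ιA × ιB × ιC) (ιA × ιB × ιC) ℂ} (hσ : σ.PosSemidef)
    {A : Fin 2 → Matrix ιA ιA ℂ} {B : Fin 2 → Matrix ιB ιB ℂ} {C : Fin 2 → Matrix ιC ιC ℂ}
    (hA : ∀ x, IsDichotomic (A x)) (hB : ∀ y, IsDichotomic (B y)) (hC : ∀ z, IsDichotomic (C z)) :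
    svetlichnyValue σ A B C ≤ 4 * σ.trace.re + (8 * √2 - 8) * negEig (ptB3 σ) := by
  have h := svetlichnyValue_le_ptA (hσ.submatrix (cyclicEquiv ιA ιB ιC)) hB hC hA
  rwa [svetlichnyValue_submatrix_cyclicEquiv, trace_submatrix_equiv, ptA_submatrix_cyclicEquiv,
    negEig_submatrix_equiv (isHermitian_ptB3 hσ.1)] at h

theorem svetlichnyValue_le_ptC3 {σ : Matrix (ιA × ιB × ιC) (ιA × ιB × ιC) ℂ} (hσ : σ.PosSemidef)
    {A : Fin 2 → Matrix ιA ιA ℂ} {B : Fin 2 → Matrix ιB ιB ℂ} {C : Fin 2 → Matrix ιC ιC ℂ}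
    (hA : ∀ x, IsDichotomic (A x)) (hB : ∀ y, IsDichotomic (B y)) (hC : ∀ z, IsDichotomic (C z)) :
    svetlichnyValue σ A B C ≤ 4 * σ.trace.re + (8 * √2 - 8) * negEig (ptC3 σ) := by
  have h := svetlichnyValue_le_ptB3 (hσ.submatrix (cyclicEquiv ιA ιB ιC)) hB hC hA
  rwa [svetlichnyValue_submatrix_cyclicEquiv, trace_submatrix_equiv, ptB3_submatrix_cyclicEquiv,
    negEig_submatrix_equiv (isHermitian_ptC3 hσ.1)] at h

end Svetlichny

/-- device-independent genuine-negativity bound for the Svetlichny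
inequality. Every decomposition ρ = σ_A + σ_B + σ_C into positive semidefinite parts
has total bipartite negativity at least (S - 4)/(8√2 - 8); hence the genuine negativity
of any state attaining Svetlichny value S is at least (S - 4)/(8√2 - 8). -/
theorem svetlichny_genuine_negativity_bound
    {ιA ιB ιC : Type*} [Fintype ιA] [Fintype ιB] [Fintype ιC]
    [Nonempty ιA] [Nonempty ιB] [Nonempty ιC]
    [DecidableEq ιA] [DecidableEq ιB] [DecidableEq ιC]
    (ρ : Matrix (ιA × ιB × ιC) (ιA × ιB × ιC) ℂ) (hρ : ρ.PosSemidef)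
    (htr : Matrix.trace ρ = 1)
    (A : Fin 2 → Matrix ιA ιA ℂ) (B : Fin 2 → Matrix ιB ιB ℂ) (C : Fin 2 → Matrix ιC ιC ℂ)
    (hA : ∀ x, (A x).IsHermitian ∧ A x * A x = 1)
    (hB : ∀ y, (B y).IsHermitian ∧ B y * B y = 1)
    (hC : ∀ z, (C z).IsHermitian ∧ C z * C z = 1)
    (S : ℝ) (hS : S = svetlichnyValue ρ A B C) :
    ∀ σA σB σC : Matrix (ιA × ιB × ιC) (ιA × ιB × ιC) ℂ,
      σA.PosSemidef → σB.PosSemidef → σC.PosSemidef → ρ = σA + σB + σC →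
      negEig (ptA σA) + negEig (ptB3 σB) + negEig (ptC3 σC) ≥
        (S - 4) / (8 * Real.sqrt 2 - 8) := by
  intro σA σB σC hσA hσB hσC hdecomp
  have hAσ := svetlichnyValue_le_ptA hσA hA hB hC
  have hBσ := svetlichnyValue_le_ptB3 hσB hA hB hC
  have hCσ := svetlichnyValue_le_ptC3 hσC hA hB hC
  have htrace : σA.trace.re + σB.trace.re + σC.trace.re = 1 := by
    rw [← Complex.add_re, ← Complex.add_re, ← trace_add, ← trace_add, ← hdecomp, htr,
      Complex.one_re]
  have hsqrt : 1 < √2 := Real.one_lt_sqrt_two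
  rw [ge_iff_le, div_le_iff₀ (by linarith), hS, hdecomp, svetlichnyValue_add, svetlichnyValue_add]
  linarith
end

section
/- I₃₃₂₂ ≤ 1/4 is a dimension witness for qutrits: let ρ be a bipartite quantum state on ι_A × ι_B where at least one of the local dimensions is at most 2 (i.e. the cardinality of ι_A or of ι_B is ≤ 2), and let M_{1|x} (x ∈ {1,2,3}) be Hermitian idempotent matrices on ι_A and N_{1|y} (y ∈ {1,2,3}) Hermitian idempotent matrices on ι_B. Then the value of the Collins–Gisin expression satisfies I₃₃₂₂ ≤ 1/4; hence any observed value exceeding 1/4 certifies that both local Hilbert space dimensions are at least 3. -/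
open Matrix
open scoped Kronecker ComplexOrder

/-- Marginal probability of outcome 1 for Alice's projection Mx. -/
noncomputable def margA {ιA ιB : Type*} [Fintype ιA] [Fintype ιB] [DecidableEq ιB]
    (ρ : Matrix (ιA × ιB) (ιA × ιB) ℂ) (Mx : Matrix ιA ιA ℂ) : ℝ :=
  (Matrix.trace (ρ * (Mx ⊗ₖ (1 : Matrix ιB ιB ℂ)))).re

/-- Marginal probability of outcome 1 for Bob's projection Ny. -/
noncomputable def margB {ιA ιB : Type*} [Fintype ιA] [Fintype ιB] [DecidableEq ιA]
    (ρ : Matrix (ιA × ιB) (ιA × ιB) ℂ) (Ny : Matrix ιB ιB ℂ) : ℝ :=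
  (Matrix.trace (ρ * ((1 : Matrix ιA ιA ℂ) ⊗ₖ Ny))).re

/-- Joint probability of outcomes (1,1) for projections Mx, Ny. -/
noncomputable def jointP {ιA ιB : Type*} [Fintype ιA] [Fintype ιB]
    (ρ : Matrix (ιA × ιB) (ιA × ιB) ℂ) (Mx : Matrix ιA ιA ℂ) (Ny : Matrix ιB ιB ℂ) : ℝ :=
  (Matrix.trace (ρ * (Mx ⊗ₖ Ny))).re

/-- The Collins–Gisin I₃₃₂₂ expression for a bipartite state ρ and projections
M x, N y onto outcome 1 of the three settings of Alice resp. Bob. -/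
noncomputable def I3322Value {ιA ιB : Type*} [Fintype ιA] [Fintype ιB]
    [DecidableEq ιA] [DecidableEq ιB]
    (ρ : Matrix (ιA × ιB) (ιA × ιB) ℂ)
    (M : Fin 3 → Matrix ιA ιA ℂ) (N : Fin 3 → Matrix ιB ιB ℂ) : ℝ :=
  -2 * margA ρ (M 0) - margA ρ (M 1) - margB ρ (N 0)
    + jointP ρ (M 0) (N 0) + jointP ρ (M 0) (N 1) + jointP ρ (M 0) (N 2)
    + jointP ρ (M 1) (N 0) + jointP ρ (M 1) (N 1) - jointP ρ (M 1) (N 2)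
    + jointP ρ (M 2) (N 0) - jointP ρ (M 2) (N 1)

/-! Put `A x = 2 M x - 1` and `B y = 2 N y - 1`. Then `4 I₃₃₂₂ + 4` is the expectation of the Bell
operator `F = (A₀ + A₁)(B₀ + B₁) + (A₀ - A₁) B₂ + A₂ (B₀ - B₁) - (A₀ + A₁) + (B₀ + B₁)`, so it is
enough to show `F ≤ 5`. For two qubits and nondegenerate `A₀, A₁, B₀, B₁`, the traceless matrices
`A₀ + A₁` and `B₀ + B₁` are multiples `2cU` and `2c'W` of symmetries. The inequality
`UW ≤ 1 + l (U - W)` for `0 ≤ l ≤ 1` decouples `F` into two summands in which only anticommuting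
terms occur; their squares are scalar, and `l` can be chosen so that the resulting bound is `5`. If
one of these observables is `±1`, then `F ≤ 5` holds in any dimension, either as a sum of
nonnegative products or by Tsirelson's inequality.

If only Alice has a qubit, Bob's effects act on her system through the states they steer it to;
these are also steered to by effects on the second half of a two-qubit purification of her state.
The new effects need not be projections, but each is a convex combination of projections, and
`I₃₃₂₂` is affine in the effects of each party. The substitution `M ↔ 1 - N` exchanges the two
parties. -/

section Symmetry

variable {R : Type*} [Ring R] [StarRing R]

/-- A self-adjoint involution, i.e. an observable with outcomes `±1`. -/
structure IsSymmetry (a : R) : Prop where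
  isSelfAdjoint : IsSelfAdjoint a
  mul_self : a * a = 1

namespace IsSymmetry

theorem one : IsSymmetry (1 : R) := ⟨.one R, mul_one 1⟩

theorem neg {a : R} (ha : IsSymmetry a) : IsSymmetry (-a) :=
  ⟨ha.isSelfAdjoint.neg, by rw [neg_mul_neg, ha.mul_self]⟩

theorem add_mul_sub_add_sub_mul_add {a b : R} (ha : IsSymmetry a) (hb : IsSymmetry b) :
    (a + b) * (a - b) + (a - b) * (a + b) = 0 := by
  linear_combination (norm := noncomm_ring) 2 * ha.mul_self - 2 * hb.mul_self

theorem map {S F : Type*} [Ring S] [StarRing S] [FunLike F R S] [RingHomClass F R S]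
    [StarHomClass F R S] (f : F) {a : R} (ha : IsSymmetry a) : IsSymmetry (f a) :=
  ⟨ha.isSelfAdjoint.map f, by rw [← map_mul, ha.mul_self, map_one]⟩

variable [Algebra ℝ R]

theorem add_sq_add_sub_sq {a b : R} (ha : IsSymmetry a) (hb : IsSymmetry b) :
    (a + b) * (a + b) + (a - b) * (a - b) = (4 : ℝ) • 1 := by
  simp only [add_mul, mul_add, sub_mul, mul_sub, ha.mul_self, hb.mul_self]
  module

variable [StarModule ℝ R]

theorem of_isStarProjection {p : R} (hp : IsStarProjection p) : IsSymmetry ((2 : ℝ) • p - 1) := by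
  refine ⟨(IsSelfAdjoint.smul (.all _) hp.isSelfAdjoint).sub (.one R), ?_⟩
  simp only [sub_mul, mul_sub, smul_mul_smul_comm, one_mul, mul_one, hp.isIdempotentElem.eq]
  module

theorem isStarProjection {a : R} (ha : IsSymmetry a) :
    IsStarProjection ((1 / 2 : ℝ) • (1 - a)) where
  isIdempotentElem := by
    simp only [IsIdempotentElem, smul_mul_smul_comm, sub_mul, mul_sub, one_mul, mul_one,
      ha.mul_self]
    module
  isSelfAdjoint := .smul (.all _) ((IsSelfAdjoint.one R).sub ha.isSelfAdjoint)

variable [PartialOrder R] [StarOrderedRing R] [IsOrderedModule ℝ R]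

theorem one_sub_mul_one_sub_nonneg {a b : R} (ha : IsSymmetry a) (hb : IsSymmetry b)
    (hab : Commute a b) : 0 ≤ (1 - a) * (1 - b) := by
  have hcomm : Commute ((1 / 2 : ℝ) • (1 - a)) ((1 / 2 : ℝ) • (1 - b)) :=
    (((Commute.one_left _).sub_left ((Commute.one_right a).sub_right hab)).smul_left _).smul_right _
  have hnonneg := (ha.isStarProjection.mul hb.isStarProjection hcomm).nonneg
  have heq : (1 - a) * (1 - b) = (4 : ℝ) • ((1 / 2 : ℝ) • (1 - a) * (1 / 2 : ℝ) • (1 - b)) := by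
    rw [smul_mul_smul_comm, smul_smul]; norm_num
  rw [heq]
  positivity

end IsSymmetry

variable [Algebra ℝ R] [PartialOrder R] [StarOrderedRing R] [IsOrderedModule ℝ R] [StarModule ℝ R]

theorem le_smul_one_of_mul_self_eq {X : R} (hX : IsSelfAdjoint X) {v : ℝ} (hv : X * X = v • 1)
    {μ : ℝ} (hμ : 0 < μ) : X ≤ ((μ ^ 2 + v) / (2 * μ)) • (1 : R) := by
  have hsq : 0 ≤ (2 * μ)⁻¹ • ((X - μ • 1) * (X - μ • 1)) :=
    smul_nonneg (by positivity) (hX.sub (.smul (.all μ) (.one R))).mul_self_nonneg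
  rw [← sub_nonneg]
  refine hsq.trans_eq ?_
  simp only [sub_mul, mul_sub, smul_mul_assoc, mul_smul_comm, one_mul, mul_one, hv]
  match_scalars <;> field_simp <;> ring

theorem smul_add_add_sub_mul_le {a₀ a₁ b : R} (ha₀ : IsSymmetry a₀)
    (ha₁ : IsSymmetry a₁) (hb : IsSymmetry b) (h₀ : Commute a₀ b) (h₁ : Commute a₁ b) {c : ℝ}
    (hc : (a₀ + a₁) * (a₀ + a₁) = (4 * c ^ 2) • 1) (k : ℝ) {μ : ℝ} (hμ : 0 < μ) :
    k • (a₀ + a₁) + (a₀ - a₁) * b ≤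
      ((μ ^ 2 + (4 * (k * c) ^ 2 + 4 - 4 * c ^ 2)) / (2 * μ)) • (1 : R) := by
  have hS : IsSelfAdjoint (a₀ + a₁) := ha₀.isSelfAdjoint.add ha₁.isSelfAdjoint
  have hD : IsSelfAdjoint (a₀ - a₁) := ha₀.isSelfAdjoint.sub ha₁.isSelfAdjoint
  have hSb := h₀.add_left h₁
  have hDb := h₀.sub_left h₁
  have hanti := ha₀.add_mul_sub_add_sub_mul_add ha₁
  have hsum := ha₀.add_sq_add_sub_sq ha₁
  set S := a₀ + a₁
  set D := a₀ - a₁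
  have hX : IsSelfAdjoint (k • S + D * b) :=
    (IsSelfAdjoint.smul (.all k) hS).add ((hD.commute_iff hb.isSelfAdjoint).1 hDb)
  refine le_smul_one_of_mul_self_eq hX ?_ hμ
  have hcross : S * (D * b) + D * b * S = 0 := by
    rw [mul_assoc D, ← hSb.eq, ← mul_assoc, ← mul_assoc, ← add_mul, hanti, zero_mul]
  have hsquare : D * b * (D * b) = D * D := by
    rw [mul_assoc, ← mul_assoc b, ← hDb.eq, mul_assoc, hb.mul_self, mul_one]
  calc (k • S + D * b) * (k • S + D * b)
      = k ^ 2 • (S * S) + k • (S * (D * b) + D * b * S) + D * b * (D * b) := by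
        simp only [add_mul, mul_add, smul_mul_assoc, mul_smul_comm]; module
    _ = (k ^ 2 - 1) • (S * S) + (S * S + D * D) := by
        rw [hcross, hsquare]; module
    _ = (4 * (k * c) ^ 2 + 4 - 4 * c ^ 2) • 1 := by
        rw [hsum, hc]; module


theorem IsSymmetry.mul_le_one_add_smul_sub {a b : R} (ha : IsSymmetry a) (hb : IsSymmetry b)
    (hab : Commute a b) {l : ℝ} (hl : l ∈ Set.Icc (0 : ℝ) 1) :
    a * b ≤ 1 + l • (a - b) := by
  have h₁ : 0 ≤ (1 - a) * (1 - -b) := ha.one_sub_mul_one_sub_nonneg hb.neg hab.neg_right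
  have h₂ : 0 ≤ (1 - -a) * (1 - b) := ha.neg.one_sub_mul_one_sub_nonneg hb hab.neg_left
  rw [← sub_nonneg]
  refine (add_nonneg (smul_nonneg (a := (1 - l) / 2) (by linarith [hl.2]) h₁)
    (smul_nonneg (a := (1 + l) / 2) (by linarith [hl.1]) h₂)).trans_eq ?_
  simp only [sub_mul, mul_sub, one_mul, mul_one, neg_mul, mul_neg]
  module

section BellOperator

/-- The Bell operator of the `±1`-valued observables `A x` and `B y` belonging to `I₃₃₂₂`, rescaled
so that `I₃₃₂₂ = ⟨bellOperator A B⟩ / 4 - 1` when `A x = 2 M x - 1` and `B y = 2 N y - 1`. -/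
def bellOperator {R : Type*} [Ring R] (A B : Fin 3 → R) : R :=
  (A 0 + A 1) * (B 0 + B 1) + (A 0 - A 1) * B 2 + A 2 * (B 0 - B 1) - (A 0 + A 1) + (B 0 + B 1)

theorem exists_sum_le_five {c c' : ℝ} (hc : 0 ≤ c) (hc' : 0 ≤ c') :
    ∃ l ∈ Set.Icc (0 : ℝ) 1, ∃ μ > 0, 4 * c * c' +
      (μ ^ 2 + (4 * ((2 * l * c' - 1) * c) ^ 2 + 4 - 4 * c ^ 2)) / (2 * μ) +
      (μ ^ 2 + (4 * ((1 - 2 * l * c) * c') ^ 2 + 4 - 4 * c' ^ 2)) / (2 * μ) ≤ 5 := by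
  -- `l = (c + c') / (4cc')` makes the two squared terms equal; it is admissible only if `l ≤ 1`.
  rcases le_or_gt (4 * (c * c')) (c + c') with h | h
  · refine ⟨1, ⟨zero_le_one, le_rfl⟩, 2, two_pos, ?_⟩
    nlinarith [mul_le_mul_of_nonneg_left h (mul_nonneg hc hc'), sq_nonneg (c * c' - 1 / 4)]
  · have hpos : 0 < 4 * (c * c') := (add_nonneg hc hc').trans_lt h
    set l := (c + c') / (4 * (c * c'))
    have hl : 4 * (l * (c * c')) = c + c' := by
      rw [mul_left_comm]; exact div_mul_cancel₀ _ hpos.ne'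
    refine ⟨l, ⟨by positivity, (div_le_one hpos).2 h.le⟩, 1, one_pos, ?_⟩
    have hA : (2 * l * c' - 1) * c = (c' - c) / 2 := by linarith
    have hB : (1 - 2 * l * c) * c' = (c' - c) / 2 := by linarith
    rw [hA, hB]
    nlinarith [sq_nonneg (c - c')]

variable {A B : Fin 3 → R} (hA : ∀ x, IsSymmetry (A x)) (hB : ∀ y, IsSymmetry (B y))
  (hAB : ∀ x y, Commute (A x) (B y))

include hA hB hAB

theorem bellOperator_le_of_add_eq_smul {U W : R} (hU : IsSymmetry U) (hW : IsSymmetry W)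
    (hUW : Commute U W) {c c' : ℝ} (hc : 0 ≤ c) (hc' : 0 ≤ c')
    (hAU : A 0 + A 1 = (2 * c) • U) (hBW : B 0 + B 1 = (2 * c') • W) :
    bellOperator A B ≤ (5 : ℝ) • 1 := by
  obtain ⟨l, hl, μ, hμ, hscalar⟩ := exists_sum_le_five hc hc'
  have hAsq : (A 0 + A 1) * (A 0 + A 1) = (4 * c ^ 2) • 1 := by
    rw [hAU, smul_mul_smul_comm, hU.mul_self]; module
  have hBsq : (B 0 + B 1) * (B 0 + B 1) = (4 * c' ^ 2) • 1 := by
    rw [hBW, smul_mul_smul_comm, hW.mul_self]; module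
  have hUWle : (4 * c * c') • (U * W) ≤ (4 * c * c') • (1 + l • (U - W)) :=
    smul_le_smul_of_nonneg_left (hU.mul_le_one_add_smul_sub hW hUW hl) (by positivity)
  have hAle := smul_add_add_sub_mul_le (hA 0) (hA 1) (hB 2) (hAB 0 2) (hAB 1 2) hAsq
    (2 * l * c' - 1) hμ
  have hBle := smul_add_add_sub_mul_le (hB 0) (hB 1) (hA 2) (hAB 2 0).symm (hAB 2 1).symm hBsq
    (1 - 2 * l * c) hμ
  calc bellOperator A B
      = (4 * c * c') • (U * W) - (2 * c) • U + (2 * c') • W +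
          (A 0 - A 1) * B 2 + (B 0 - B 1) * A 2 := by
        rw [bellOperator, ((hAB 2 0).sub_right (hAB 2 1)).eq, hAU, hBW, smul_mul_smul_comm]
        module
    _ ≤ (4 * c * c') • (1 + l • (U - W)) - (2 * c) • U + (2 * c') • W +
          (A 0 - A 1) * B 2 + (B 0 - B 1) * A 2 := by gcongr
    _ = (4 * c * c') • 1 + ((2 * l * c' - 1) • (A 0 + A 1) + (A 0 - A 1) * B 2) +
          ((1 - 2 * l * c) • (B 0 + B 1) + (B 0 - B 1) * A 2) := by
        rw [hAU, hBW]; module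
    _ ≤ _ := add_le_add (add_le_add le_rfl hAle) hBle
    _ ≤ (5 : ℝ) • 1 := by
        rw [← add_smul, ← add_smul]
        exact smul_le_smul_of_nonneg_right hscalar zero_le_one

theorem bellOperator_le_of_left_zero_eq_one (h : A 0 = 1) : bellOperator A B ≤ (5 : ℝ) • 1 := by
  have key {a b : R} (ha : IsSymmetry a) (hb : IsSymmetry b) (hab : Commute a b) :=
    ha.one_sub_mul_one_sub_nonneg hb hab
  have h₁ := key (hA 1).neg (hB 0) (hAB 1 0).neg_left
  have h₂ := key (hA 1).neg (hB 1) (hAB 1 1).neg_left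
  have h₃ := key (hA 1) (hB 2) (hAB 1 2)
  have h₄ := key (hA 2).neg (hB 0) (hAB 2 0).neg_left
  have h₅ := key (hA 2) (hB 1) (hAB 2 1)
  rw [← sub_nonneg]
  refine (add_nonneg (zero_le_one (α := R))
    (add_nonneg (add_nonneg (add_nonneg (add_nonneg h₁ h₂) h₃) h₄) h₅)).trans_eq ?_
  simp only [bellOperator, h, sub_mul, mul_sub, add_mul, mul_add, one_mul, mul_one, neg_mul]
  module

theorem bellOperator_le_of_left_zero_eq_neg_one (h : A 0 = -1) :
    bellOperator A B ≤ (5 : ℝ) • 1 := by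
  have hCHSH := tsirelson_inequality (A 1) (A 2) (B 0) (B 1)
    { A₀_inv := (sq _).trans (hA 1).mul_self
      A₁_inv := (sq _).trans (hA 2).mul_self
      B₀_inv := (sq _).trans (hB 0).mul_self
      B₁_inv := (sq _).trans (hB 1).mul_self
      A₀_sa := (hA 1).isSelfAdjoint
      A₁_sa := (hA 2).isSelfAdjoint
      B₀_sa := (hB 0).isSelfAdjoint
      B₁_sa := (hB 1).isSelfAdjoint
      A₀B₀_commutes := hAB 1 0
      A₀B₁_commutes := hAB 1 1
      A₁B₀_commutes := hAB 2 0
      A₁B₁_commutes := hAB 2 1 }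
  have hsqrt : √2 ^ 3 ≤ 3 := by
    have := Real.sq_sqrt (zero_le_two (α := ℝ))
    nlinarith [Real.sqrt_nonneg 2, sq_nonneg (√2 - 3 / 2)]
  have h₁ := sub_nonneg.2 (hCHSH.trans (smul_le_smul_of_nonneg_right hsqrt (zero_le_one (α := R))))
  have h₂ := (hA 1).neg.one_sub_mul_one_sub_nonneg (hB 2).neg (hAB 1 2).neg_left.neg_right
  rw [← sub_nonneg]
  refine (add_nonneg h₁ h₂).trans_eq ?_
  simp only [bellOperator, h, sub_mul, mul_sub, add_mul, mul_add, one_mul, mul_one, neg_mul,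
    mul_neg]
  module

theorem bellOperator_le_of_left_eq {x : Fin 3} (hx : x ≠ 2) (h : A x = 1 ∨ A x = -1) :
    bellOperator A B ≤ (5 : ℝ) • 1 := by
  wlog hx₀ : x = 0 generalizing A B x
  · have hx₁ : x = 1 := by lia
    have hswap : bellOperator ![A 1, A 0, A 2] ![B 0, B 1, -B 2] = bellOperator A B := by
      simp only [bellOperator, cons_val]
      noncomm_ring
    rw [← hswap]
    refine this (x := 0) ?_ ?_ ?_ (by decide) (hx₁ ▸ h) rfl
    · simp [Fin.forall_fin_succ, hA]
    · simp [Fin.forall_fin_succ, hB, (hB 2).neg]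
    · simp [Fin.forall_fin_succ, hAB]
  subst hx₀
  exact h.elim (bellOperator_le_of_left_zero_eq_one hA hB hAB)
    (bellOperator_le_of_left_zero_eq_neg_one hA hB hAB)

theorem bellOperator_le_of_right_eq {y : Fin 3} (hy : y ≠ 2) (h : B y = 1 ∨ B y = -1) :
    bellOperator A B ≤ (5 : ℝ) • 1 := by
  have hswap : bellOperator (fun x => -B x) (fun y => -A y) = bellOperator A B := by
    have h₁ := (((hAB 0 0).add_right (hAB 0 1)).add_left ((hAB 1 0).add_right (hAB 1 1))).eq
    have h₂ := ((hAB 0 2).sub_left (hAB 1 2)).eq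
    have h₃ := ((hAB 2 0).sub_right (hAB 2 1)).eq
    simp only [bellOperator, h₁, h₂, h₃]
    noncomm_ring
  rw [← hswap]
  refine bellOperator_le_of_left_eq (fun y => (hB y).neg) (fun x => (hA x).neg)
    (fun y x => (hAB x y).symm.neg_left.neg_right) hy ?_
  rwa [neg_inj, neg_eq_iff_eq_neg, or_comm]

end BellOperator

end Symmetry

section Qubit

open scoped MatrixOrder

variable {n : Type*} [Fintype n] [DecidableEq n]

theorem exists_mul_self_eq_trace_smul_sub (hn : Fintype.card n ≤ 2) (X : Matrix n n ℂ) :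
    ∃ d : ℂ, X * X = X.trace • X - d • 1 := by
  obtain h | h | h : Fintype.card n = 0 ∨ Fintype.card n = 1 ∨ Fintype.card n = 2 := by lia
  · have := Fintype.card_eq_zero_iff.1 h
    exact ⟨0, Subsingleton.elim _ _⟩
  · obtain ⟨i, hi⟩ := Fintype.card_eq_one_iff.1 h
    have : Unique n := ⟨⟨i⟩, hi⟩
    refine ⟨0, ?_⟩
    ext a b
    simp [Subsingleton.elim a default, Subsingleton.elim b default, mul_apply, trace]
  · refine ⟨X.det, ?_⟩
    have hCH := X.aeval_self_charpoly
    rw [X.charpoly_of_card_eq_two h] at hCH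
    simp only [map_add, map_sub, map_mul, Polynomial.aeval_X, Polynomial.aeval_C,
      Algebra.algebraMap_eq_smul_one, smul_mul_assoc, one_mul, sq] at hCH
    linear_combination (norm := module) hCH

theorem IsSymmetry.eq_one_or_eq_neg_one_or_trace_eq_zero (hn : Fintype.card n ≤ 2)
    {Y : Matrix n n ℂ} (hY : IsSymmetry Y) : (Y = 1 ∨ Y = -1) ∨ Y.trace = 0 := by
  obtain ⟨d, hd⟩ := exists_mul_self_eq_trace_smul_sub hn Y
  refine or_iff_not_imp_right.2 fun htr => ?_
  obtain ⟨s, rfl⟩ : ∃ s : ℂ, Y = s • 1 := by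
    refine ⟨Y.trace⁻¹ * (1 + d), ?_⟩
    rw [mul_smul, eq_inv_smul_iff₀ htr, add_smul, one_smul]
    linear_combination (norm := module) hY.mul_self - hd
  have hs : ((s - 1) * (s + 1)) • (1 : Matrix n n ℂ) = 0 := by
    have := hY.mul_self
    rw [smul_mul_smul_comm, one_mul] at this
    linear_combination (norm := module) this
  obtain h | h := smul_eq_zero.1 hs
  · obtain h | h := mul_eq_zero.1 h
    · left; rw [sub_eq_zero.1 h, one_smul]
    · right; rw [eq_neg_of_add_eq_zero_left h, neg_smul, one_smul]
  · left; rw [h, smul_zero]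

theorem exists_eq_smul_isSymmetry (hn : Fintype.card n ≤ 2) {X : Matrix n n ℂ}
    (hX : IsSelfAdjoint X) (htr : X.trace = 0) :
    ∃ c : ℝ, 0 ≤ c ∧ ∃ U : Matrix n n ℂ, IsSymmetry U ∧ X = (2 * c) • U := by
  obtain rfl | hX₀ := eq_or_ne X 0
  · exact ⟨0, le_rfl, 1, .one, by simp⟩
  obtain ⟨d, hd⟩ := exists_mul_self_eq_trace_smul_sub hn X
  rw [htr, zero_smul, zero_sub, ← neg_smul] at hd
  obtain ⟨i, -⟩ := Function.ne_iff.1 hX₀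
  have hd₀ : 0 ≤ -d := by
    have := (posSemidef_conjTranspose_mul_self X).diag_nonneg (i := i)
    rwa [← star_eq_conjTranspose, hX.star_eq, hd, Matrix.smul_apply, one_apply_eq, smul_eq_mul,
      mul_one] at this
  obtain ⟨r, hr, hrd⟩ := RCLike.nonneg_iff_exists_ofReal.1 hd₀
  have hXX : X * X = r • 1 := by rw [hd, ← hrd]; rfl
  obtain rfl | hr₀ := hr.eq_or_lt
  · rw [zero_smul] at hXX
    refine absurd (conjTranspose_mul_self_eq_zero.1 ?_) hX₀
    rw [← star_eq_conjTranspose, hX.star_eq, hXX]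
  have hsqrt : √r ≠ 0 := (Real.sqrt_pos.2 hr₀).ne'
  refine ⟨√r / 2, by positivity, (√r)⁻¹ • X, ⟨.smul (.all _) hX, ?_⟩, ?_⟩
  · rw [smul_mul_smul_comm, hXX, smul_smul, ← mul_inv, Real.mul_self_sqrt hr,
      inv_mul_cancel₀ hr₀.ne', one_smul]
  · rw [mul_div_cancel₀ _ two_ne_zero, smul_inv_smul₀ hsqrt]

end Qubit

section LocalAlgebras

variable (ιA ιB : Type*) [Fintype ιA] [Fintype ιB] [DecidableEq ιA] [DecidableEq ιB]

/-- The embedding `a ↦ a ⊗ 1` of Alice's observables, as a real `*`-algebra homomorphism. -/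
noncomputable def aliceHom : Matrix ιA ιA ℂ →⋆ₐ[ℝ] Matrix (ιA × ιB) (ιA × ιB) ℂ where
  toFun a := a ⊗ₖ 1
  map_one' := one_kronecker_one
  map_mul' a a' := by rw [← mul_kronecker_mul, one_mul]
  map_zero' := zero_kronecker 1
  map_add' a a' := add_kronecker a a' 1
  commutes' r := by
    rw [Algebra.algebraMap_eq_smul_one, Algebra.algebraMap_eq_smul_one, smul_kronecker,
      one_kronecker_one]
  map_star' a := by
    rw [star_eq_conjTranspose, star_eq_conjTranspose, conjTranspose_kronecker, conjTranspose_one]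

/-- The embedding `b ↦ 1 ⊗ b` of Bob's observables, as a real `*`-algebra homomorphism. -/
noncomputable def bobHom : Matrix ιB ιB ℂ →⋆ₐ[ℝ] Matrix (ιA × ιB) (ιA × ιB) ℂ where
  toFun b := 1 ⊗ₖ b
  map_one' := one_kronecker_one
  map_mul' b b' := by rw [← mul_kronecker_mul, one_mul]
  map_zero' := kronecker_zero 1
  map_add' b b' := kronecker_add 1 b b'
  commutes' r := by
    rw [Algebra.algebraMap_eq_smul_one, Algebra.algebraMap_eq_smul_one, kronecker_smul,
      one_kronecker_one]
  map_star' a := by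
    rw [star_eq_conjTranspose, star_eq_conjTranspose, conjTranspose_kronecker, conjTranspose_one]

variable {ιA ιB}

theorem aliceHom_mul_bobHom (a : Matrix ιA ιA ℂ) (b : Matrix ιB ιB ℂ) :
    aliceHom ιA ιB a * bobHom ιA ιB b = a ⊗ₖ b := by
  change a ⊗ₖ 1 * 1 ⊗ₖ b = a ⊗ₖ b
  rw [← mul_kronecker_mul, one_mul, mul_one]

theorem commute_aliceHom_bobHom (a : Matrix ιA ιA ℂ) (b : Matrix ιB ιB ℂ) :
    Commute (aliceHom ιA ιB a) (bobHom ιA ιB b) := by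
  rw [Commute, SemiconjBy, aliceHom_mul_bobHom]
  change a ⊗ₖ b = 1 ⊗ₖ b * a ⊗ₖ 1
  rw [← mul_kronecker_mul, one_mul, mul_one]

open scoped MatrixOrder

theorem bellOperator_aliceHom_bobHom_le (hιA : Fintype.card ιA ≤ 2) (hιB : Fintype.card ιB ≤ 2)
    {a : Fin 3 → Matrix ιA ιA ℂ} {b : Fin 3 → Matrix ιB ιB ℂ} (ha : ∀ x, IsSymmetry (a x))
    (hb : ∀ y, IsSymmetry (b y)) :
    bellOperator (fun x => aliceHom ιA ιB (a x)) (fun y => bobHom ιA ιB (b y)) ≤ (5 : ℝ) • 1 := by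
  have hA x := (ha x).map (aliceHom ιA ιB)
  have hB y := (hb y).map (bobHom ιA ιB)
  have hAB x y := commute_aliceHom_bobHom (a x) (b y)
  by_cases hdetA : ∃ x ≠ 2, a x = 1 ∨ a x = -1
  · obtain ⟨x, hx, h⟩ := hdetA
    exact bellOperator_le_of_left_eq hA hB hAB hx (h.imp (by simp [·]) (by simp [·]))
  by_cases hdetB : ∃ y ≠ 2, b y = 1 ∨ b y = -1
  · obtain ⟨y, hy, h⟩ := hdetB
    exact bellOperator_le_of_right_eq hA hB hAB hy (h.imp (by simp [·]) (by simp [·]))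
  push Not at hdetA hdetB
  have hAtr x (hx : x ≠ 2) : (a x).trace = 0 :=
    ((ha x).eq_one_or_eq_neg_one_or_trace_eq_zero hιA).resolve_left (not_or.2 (hdetA x hx))
  have hBtr y (hy : y ≠ 2) : (b y).trace = 0 :=
    ((hb y).eq_one_or_eq_neg_one_or_trace_eq_zero hιB).resolve_left (not_or.2 (hdetB y hy))
  obtain ⟨c, hc, U, hU, hAU⟩ := exists_eq_smul_isSymmetry hιA
    ((ha 0).isSelfAdjoint.add (ha 1).isSelfAdjoint)
    (by rw [trace_add, hAtr 0 (by decide), hAtr 1 (by decide), add_zero])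
  obtain ⟨c', hc', W, hW, hBW⟩ := exists_eq_smul_isSymmetry hιB
    ((hb 0).isSelfAdjoint.add (hb 1).isSelfAdjoint)
    (by rw [trace_add, hBtr 0 (by decide), hBtr 1 (by decide), add_zero])
  exact bellOperator_le_of_add_eq_smul hA hB hAB (hU.map _) (hW.map _)
    (commute_aliceHom_bobHom U W) hc hc' (by rw [← map_add, hAU, map_smul])
    (by rw [← map_add, hBW, map_smul])

end LocalAlgebras

section Expectation

open scoped MatrixOrder

variable {n : Type*} [Fintype n]

/-- The expectation value `Re tr (ρ X)` in the state `ρ`, as a real-linear functional of `X`. -/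
noncomputable def expectation (ρ : Matrix n n ℂ) : Matrix n n ℂ →ₗ[ℝ] ℝ :=
  Complex.reLm ∘ₗ traceLinearMap n ℝ ℂ ∘ₗ LinearMap.mulLeft ℝ ρ

theorem expectation_one [DecidableEq n] {ρ : Matrix n n ℂ} (hρ : ρ.trace = 1) :
    expectation ρ 1 = 1 := by
  simp [expectation, hρ]

theorem trace_mul_nonneg {ρ X : Matrix n n ℂ} (hρ : 0 ≤ ρ) (hX : 0 ≤ X) : 0 ≤ (ρ * X).trace := by
  classical
  obtain ⟨Y, rfl⟩ := CStarAlgebra.nonneg_iff_eq_star_mul_self.1 hX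
  rw [← mul_assoc, trace_mul_comm, ← mul_assoc]
  exact ((nonneg_iff_posSemidef.1 hρ).mul_mul_conjTranspose_same Y).trace_nonneg

theorem expectation_mono {ρ : Matrix n n ℂ} (hρ : 0 ≤ ρ) : Monotone (expectation ρ) := by
  intro X Y hXY
  rw [← sub_nonneg, ← map_sub]
  exact (Complex.nonneg_iff.1 (trace_mul_nonneg hρ (sub_nonneg.2 hXY))).1

variable {ιA ιB : Type*} [Fintype ιA] [Fintype ιB] [DecidableEq ιA] [DecidableEq ιB]
  (ρ : Matrix (ιA × ιB) (ιA × ιB) ℂ) (M : Fin 3 → Matrix ιA ιA ℂ) (N : Fin 3 → Matrix ιB ιB ℂ)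

theorem margA_eq_expectation (Mx : Matrix ιA ιA ℂ) :
    margA ρ Mx = expectation ρ (aliceHom ιA ιB Mx) :=
  rfl

theorem margB_eq_expectation (Ny : Matrix ιB ιB ℂ) :
    margB ρ Ny = expectation ρ (bobHom ιA ιB Ny) :=
  rfl

theorem jointP_eq_expectation (Mx : Matrix ιA ιA ℂ) (Ny : Matrix ιB ιB ℂ) :
    jointP ρ Mx Ny = expectation ρ (aliceHom ιA ιB Mx * bobHom ιA ιB Ny) := by
  rw [aliceHom_mul_bobHom]; rfl

theorem I3322Value_eq_expectation_bellOperator :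
    I3322Value ρ M N =
      expectation ρ (bellOperator (fun x => aliceHom ιA ιB ((2 : ℝ) • M x - 1))
        (fun y => bobHom ιA ιB ((2 : ℝ) • N y - 1))) / 4 - expectation ρ 1 := by
  simp only [I3322Value, margA_eq_expectation, margB_eq_expectation, jointP_eq_expectation,
    bellOperator, map_sub, map_add, map_smul, map_one, mul_add, add_mul, mul_sub, sub_mul, one_mul,
    mul_one, smul_mul_assoc, mul_smul_comm, smul_eq_mul]
  ring

variable {ρ M N}

theorem I3322Value_le_of_isStarProjection (hιA : Fintype.card ιA ≤ 2) (hιB : Fintype.card ιB ≤ 2)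
    (hρ : 0 ≤ ρ) (htr : ρ.trace = 1) (hM : ∀ x, IsStarProjection (M x))
    (hN : ∀ y, IsStarProjection (N y)) : I3322Value ρ M N ≤ 1 / 4 := by
  have h := expectation_mono hρ (bellOperator_aliceHom_bobHom_le hιA hιB
    (fun x => .of_isStarProjection (hM x)) (fun y => .of_isStarProjection (hN y)))
  rw [map_smul, expectation_one htr, smul_eq_mul] at h
  rw [I3322Value_eq_expectation_bellOperator, expectation_one htr]
  linarith

end Expectation

section Effects

open scoped MatrixOrder

variable {n : Type*} [Fintype n]

theorem exists_pseudoInverse {S : Matrix n n ℂ} (hS : IsSelfAdjoint S) :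
    ∃ P : Matrix n n ℂ, IsSelfAdjoint P ∧ Commute S P ∧ S * P * S = S := by
  classical
  have hcont (f : ℝ → ℝ) : ContinuousOn f (spectrum ℝ S) := finite_real_spectrum.continuousOn f
  have hid : cfc (fun x : ℝ => x) S = S := cfc_id' ℝ S
  refine ⟨cfc (fun x : ℝ => x⁻¹) S, cfc_predicate _ S, ?_, ?_⟩
  · simpa only [hid] using cfc_commute_cfc (fun x : ℝ => x) (fun x : ℝ => x⁻¹) S
  · calc S * cfc (fun x : ℝ => x⁻¹) S * S = cfc (fun x : ℝ => x * x⁻¹ * x) S := by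
          rw [cfc_mul _ _ S (hcont _) (hcont _), cfc_mul _ _ S (hcont _) (hcont _), hid]
      _ = S := by simp only [mul_inv_mul_cancel, hid]

variable [DecidableEq n]

theorem effect_mem_convexHull_isStarProjection {E : Matrix n n ℂ} (hE : E ∈ Set.Icc 0 1) :
    E ∈ convexHull ℝ {P : Matrix n n ℂ | IsStarProjection P} := by
  have hherm : E.IsHermitian := (nonneg_iff_posSemidef.1 hE.1).isHermitian
  let φ : (n → ℝ) →ₗ[ℝ] Matrix n n ℂ :=
    { toFun v :=
        Unitary.conjStarAlgAut ℂ _ hherm.eigenvectorUnitary (diagonal fun i => (v i : ℂ))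
      map_add' v w := by
        rw [← map_add, diagonal_add]
        simp only [Pi.add_apply, Complex.ofReal_add]
      map_smul' r v := by
        rw [RingHom.id_apply, ← Complex.coe_smul r, ← map_smul, ← diagonal_smul]
        simp [Pi.smul_def]}
  have heig : hherm.eigenvalues ∈ convexHull ℝ (Set.univ.pi fun _ => {0, 1}) := by
    rw [convexHull_pi]
    intro i _
    rw [convexHull_pair, segment_eq_Icc zero_le_one]
    exact ⟨(nonneg_iff_posSemidef.1 hE.1).eigenvalues_nonneg i,
      (le_algebraMap_iff_spectrum_le (R := ℝ) (r := 1) hherm).1 (by rw [map_one]; exact hE.2) _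
        (hherm.eigenvalues_mem_spectrum_real i)⟩
  have hmem := Set.mem_image_of_mem φ heig
  rw [φ.image_convexHull, show φ hherm.eigenvalues = E from hherm.spectral_theorem.symm] at hmem
  refine convexHull_mono ?_ hmem
  rintro _ ⟨v, hv, rfl⟩
  suffices IsStarProjection (diagonal fun i => (v i : ℂ)) from
    this.map (Unitary.conjStarAlgAut ℂ _ hherm.eigenvectorUnitary)
  refine ⟨?_, ?_⟩
  · rw [IsIdempotentElem, diagonal_mul_diagonal]
    congr 1; ext i
    obtain h | h := hv i trivial <;> simp_all
  · exact isHermitian_diagonal_of_self_adjoint _ (by ext i; simp)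

theorem mem_of_convex_of_forall_isStarProjection_mem {ι : Type*} [Finite ι]
    {K : Set (ι → Matrix n n ℂ)} (hK : Convex ℝ K)
    (hproj : ∀ P, (∀ i, IsStarProjection (P i)) → P ∈ K) {E : ι → Matrix n n ℂ}
    (hE : ∀ i, E i ∈ Set.Icc 0 1) : E ∈ K := by
  have hsub : (Set.univ.pi fun _ : ι => {P : Matrix n n ℂ | IsStarProjection P}) ⊆ K :=
    fun P hP => hproj P fun i => hP i trivial
  refine convexHull_min hsub hK ?_
  rw [convexHull_pi]
  exact fun i _ => effect_mem_convexHull_isStarProjection (hE i)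

theorem exists_eq_conjugate_of_le_mul_self {S σ : Matrix n n ℂ} (hS : IsSelfAdjoint S)
    (hσ : 0 ≤ σ) (hσS : σ ≤ S * S) :
    ∃ T ∈ Set.Icc (0 : Matrix n n ℂ) 1, σ = S * T * S := by
  obtain ⟨P, hP, hSP, hSPS⟩ := exists_pseudoInverse hS
  have hproj : IsStarProjection (S * P) :=
    ⟨by rw [IsIdempotentElem, ← mul_assoc, hSPS], (hS.commute_iff hP).1 hSP⟩
  have hker : S * (1 - S * P) = 0 := by
    rw [mul_sub, mul_one, hSP.eq, ← mul_assoc, hSPS, sub_self]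
  have hsupp : σ * (1 - S * P) = 0 := by
    have hzero : (1 - S * P) * σ * (1 - S * P) = 0 := by
      refine le_antisymm ?_ (hproj.one_sub.isSelfAdjoint.conjugate_nonneg hσ)
      refine (hproj.one_sub.isSelfAdjoint.conjugate_le_conjugate hσS).trans_eq ?_
      rw [mul_assoc, mul_assoc S, hker, mul_zero, mul_zero]
    obtain ⟨Y, rfl⟩ := CStarAlgebra.nonneg_iff_eq_star_mul_self.1 hσ
    have hY : Y * (1 - S * P) = 0 := by
      rw [← conjTranspose_mul_self_eq_zero, ← star_eq_conjTranspose, star_mul,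
        hproj.one_sub.isSelfAdjoint.star_eq]
      simpa only [mul_assoc] using hzero
    rw [mul_assoc, hY, mul_zero]
  have hsupp' : σ = (S * P) * σ * (S * P) := by
    have hleft : (1 - S * P) * σ = 0 := by
      simpa [hproj.one_sub.isSelfAdjoint.star_eq, (IsSelfAdjoint.of_nonneg hσ).star_eq] using
        congrArg star hsupp
    linear_combination (norm := noncomm_ring) hleft + S * P * hsupp
  refine ⟨P * σ * P, ⟨hP.conjugate_nonneg hσ, ?_⟩, ?_⟩
  · calc P * σ * P ≤ P * (S * S) * P := hP.conjugate_le_conjugate hσS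
      _ = S * P := by rw [← mul_assoc, mul_assoc, hSP.eq, ← hSP.eq, hproj.isIdempotentElem.eq]
      _ ≤ 1 := hproj.le_one
  · conv_lhs => rw [hsupp']
    nth_rewrite 2 [hSP.eq]
    simp only [mul_assoc]

end Effects

section Steering

open scoped MatrixOrder

variable {ιA ιB : Type*} [Fintype ιB]

/-- The partial trace over the second tensor factor. -/
def partialTrace (X : Matrix (ιA × ιB) (ιA × ιB) ℂ) : Matrix ιA ιA ℂ :=
  ∑ k, X.submatrix (·, k) (·, k)

theorem partialTrace_apply (X : Matrix (ιA × ιB) (ιA × ιB) ℂ) (i j : ιA) :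
    partialTrace X i j = ∑ k, X (i, k) (j, k) := by
  simp only [partialTrace, Matrix.sum_apply, submatrix_apply]

theorem partialTrace_nonneg {X : Matrix (ιA × ιB) (ιA × ιB) ℂ} (hX : 0 ≤ X) :
    0 ≤ partialTrace X :=
  Finset.sum_nonneg fun k _ => ((nonneg_iff_posSemidef.1 hX).submatrix (·, k)).nonneg

theorem partialTrace_sub (X Y : Matrix (ιA × ιB) (ιA × ιB) ℂ) :
    partialTrace (X - Y) = partialTrace X - partialTrace Y := by
  simp only [partialTrace, submatrix_sub, Pi.sub_apply, Finset.sum_sub_distrib]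

variable [Fintype ιA]

theorem trace_mul_kronecker_one [DecidableEq ιB] (X : Matrix (ιA × ιB) (ιA × ιB) ℂ)
    (M : Matrix ιA ιA ℂ) : (X * (M ⊗ₖ 1)).trace = (partialTrace X * M).trace := by
  simp only [trace, diag_apply, mul_apply, partialTrace_apply, kronecker_apply,
    Fintype.sum_prod_type, one_apply, mul_ite, mul_one, mul_zero, Finset.sum_ite_eq',
    Finset.mem_univ, if_true, Finset.sum_mul]
  exact Finset.sum_congr rfl fun i _ => Finset.sum_comm

theorem trace_vecMulVec_vec_transpose_mul_kronecker {S : Matrix ιA ιA ℂ} (hS : IsSelfAdjoint S)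
    (M T : Matrix ιA ιA ℂ) :
    (vecMulVec (vec Sᵀ) (star (vec Sᵀ)) * (M ⊗ₖ Tᵀ)).trace = (S * T * S * M).trace := by
  have hconj : (Sᵀᴴ)ᵀ = S := by
    rw [conjTranspose_transpose_eq_transpose_conjTranspose, transpose_transpose]; exact hS
  rw [trace_mul_comm, mul_vecMulVec, kronecker_mulVec_vec, trace_vecMulVec, dotProduct_comm,
    star_vec_dotProduct_vec, ← trace_transpose, transpose_mul, hconj, transpose_mul, transpose_mul,
    transpose_transpose, transpose_transpose, transpose_transpose, mul_assoc, trace_mul_comm,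
    mul_assoc S T]

variable [DecidableEq ιA]

variable [DecidableEq ιB]

theorem partialTrace_mul_bobHom_comm (X : Matrix (ιA × ιB) (ιA × ιB) ℂ) (N : Matrix ιB ιB ℂ) :
    partialTrace (X * bobHom ιA ιB N) = partialTrace (bobHom ιA ιB N * X) := by
  change partialTrace (X * (1 ⊗ₖ N)) = partialTrace ((1 ⊗ₖ N) * X)
  ext i j
  simp only [partialTrace_apply, mul_apply, kronecker_apply, Fintype.sum_prod_type_right, one_apply,
    ite_mul, mul_ite, one_mul, zero_mul, mul_zero, Finset.sum_ite_eq, Finset.sum_ite_eq',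
    Finset.mem_univ, if_true]
  rw [Finset.sum_comm]
  simp only [mul_comm]

/-- The unnormalised state that Bob's outcome with effect `N` leaves on Alice's side. -/
noncomputable def steeredState (ρ : Matrix (ιA × ιB) (ιA × ιB) ℂ) (N : Matrix ιB ιB ℂ) :
    Matrix ιA ιA ℂ :=
  partialTrace (ρ * bobHom ιA ιB N)

variable {ρ : Matrix (ιA × ιB) (ιA × ιB) ℂ}

theorem trace_mul_kronecker_eq_steeredState (M : Matrix ιA ιA ℂ) (N : Matrix ιB ιB ℂ) :
    (ρ * (M ⊗ₖ N)).trace = (steeredState ρ N * M).trace := by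
  rw [steeredState, ← trace_mul_kronecker_one, mul_assoc, ← aliceHom_mul_bobHom,
    (commute_aliceHom_bobHom M N).eq]
  rfl

theorem steeredState_nonneg (hρ : 0 ≤ ρ) {N : Matrix ιB ιB ℂ} (hN : 0 ≤ N) :
    0 ≤ steeredState ρ N := by
  obtain ⟨Y, rfl⟩ := CStarAlgebra.nonneg_iff_eq_star_mul_self.1 hN
  have hcyclic : steeredState ρ (star Y * Y) =
      partialTrace (bobHom ιA ιB Y * ρ * star (bobHom ιA ιB Y)) := by
    rw [steeredState, map_mul, map_star, ← mul_assoc, partialTrace_mul_bobHom_comm, mul_assoc]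
  rw [hcyclic]
  exact partialTrace_nonneg (star_right_conjugate_nonneg hρ _)

theorem steeredState_mono (hρ : 0 ≤ ρ) : Monotone (steeredState ρ) := by
  intro N N' hN
  rw [← sub_nonneg]
  refine (steeredState_nonneg hρ (sub_nonneg.2 hN)).trans_eq ?_
  rw [steeredState, map_sub, mul_sub, partialTrace_sub, steeredState, steeredState]

/-- Schrödinger's steering theorem: every `0 ≤ σ ≤ S²` is the state to which some effect steers the
first half of the purification `∑ i j, S i j • eᵢ ⊗ eⱼ` of the reduced state `S²`. -/
theorem exists_steering (hρ : 0 ≤ ρ) :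
    ∃ ρ' : Matrix (ιA × ιA) (ιA × ιA) ℂ, 0 ≤ ρ' ∧
      (∀ M, (ρ * (M ⊗ₖ 1)).trace = (ρ' * (M ⊗ₖ 1)).trace) ∧
      ∀ N ∈ Set.Icc (0 : Matrix ιB ιB ℂ) 1, ∃ N' ∈ Set.Icc (0 : Matrix ιA ιA ℂ) 1,
        ∀ M, (ρ * (M ⊗ₖ N)).trace = (ρ' * (M ⊗ₖ N')).trace := by
  obtain ⟨S, hS, hSS⟩ := CStarAlgebra.nonneg_iff_exists_isSelfAdjoint_and_eq_mul_self.1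
    (steeredState_nonneg hρ zero_le_one)
  refine ⟨vecMulVec (vec Sᵀ) (star (vec Sᵀ)), (posSemidef_vecMulVec_self_star _).nonneg,
    fun M => ?_, fun N hN => ?_⟩
  · rw [trace_mul_kronecker_eq_steeredState, hSS, ← transpose_one,
      trace_vecMulVec_vec_transpose_mul_kronecker hS, mul_one]
  · obtain ⟨T, hT, hσ⟩ := exists_eq_conjugate_of_le_mul_self hS (steeredState_nonneg hρ hN.1)
      ((steeredState_mono hρ hN.2).trans_eq hSS)
    refine ⟨Tᵀ, ⟨(nonneg_iff_posSemidef.1 hT.1).transpose.nonneg, ?_⟩, fun M => ?_⟩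
    · rw [← transpose_one, ← sub_nonneg, ← transpose_sub]
      exact (le_iff.1 hT.2).transpose.nonneg
    · rw [trace_mul_kronecker_eq_steeredState, trace_vecMulVec_vec_transpose_mul_kronecker hS, hσ]

end Steering

section Witness

open scoped MatrixOrder

variable {ιA ιB : Type*} [Fintype ιA] [Fintype ιB]

theorem trace_submatrix_swap_mul_kronecker (ρ : Matrix (ιA × ιB) (ιA × ιB) ℂ)
    (a : Matrix ιA ιA ℂ) (b : Matrix ιB ιB ℂ) :
    (ρ.submatrix Prod.swap Prod.swap * (b ⊗ₖ a)).trace = (ρ * (a ⊗ₖ b)).trace := by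
  have hswap : b ⊗ₖ a = (a ⊗ₖ b).submatrix Prod.swap Prod.swap := by
    ext; exact mul_comm _ _
  rw [hswap, ← Equiv.coe_prodComm, submatrix_mul_equiv]
  exact Equiv.sum_comp _ fun p => (ρ * (a ⊗ₖ b)) p p

variable [DecidableEq ιA] [DecidableEq ιB]
  {ρ : Matrix (ιA × ιB) (ιA × ιB) ℂ} {M : Fin 3 → Matrix ιA ιA ℂ} {N : Fin 3 → Matrix ιB ιB ℂ}


theorem convex_setOf_I3322Value_le_left (ρ : Matrix (ιA × ιB) (ιA × ιB) ℂ)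
    (N : Fin 3 → Matrix ιB ιB ℂ) (r : ℝ) : Convex ℝ {M | I3322Value ρ M N ≤ r} := by
  intro M hM M' hM' a b ha hb hab
  calc I3322Value ρ (a • M + b • M') N = a * I3322Value ρ M N + b * I3322Value ρ M' N := by
        obtain rfl := eq_sub_of_add_eq hab
        simp only [I3322Value, margA_eq_expectation, margB_eq_expectation, jointP_eq_expectation,
          Pi.add_apply, Pi.smul_apply, map_add, map_smul, add_mul, smul_mul_assoc, smul_eq_mul]
        ring
    _ ≤ a * r + b * r := by gcongr <;> assumption
    _ = r := by rw [← add_mul, hab, one_mul]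

theorem convex_setOf_I3322Value_le_right (ρ : Matrix (ιA × ιB) (ιA × ιB) ℂ)
    (M : Fin 3 → Matrix ιA ιA ℂ) (r : ℝ) : Convex ℝ {N | I3322Value ρ M N ≤ r} := by
  intro N hN N' hN' a b ha hb hab
  calc I3322Value ρ M (a • N + b • N') = a * I3322Value ρ M N + b * I3322Value ρ M N' := by
        obtain rfl := eq_sub_of_add_eq hab
        simp only [I3322Value, margA_eq_expectation, margB_eq_expectation, jointP_eq_expectation,
          Pi.add_apply, Pi.smul_apply, map_add, map_smul, mul_add, mul_smul_comm, smul_eq_mul]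
        ring
    _ ≤ a * r + b * r := by gcongr <;> assumption
    _ = r := by rw [← add_mul, hab, one_mul]

theorem I3322Value_le_of_card_le_two_of_card_le_two (hιA : Fintype.card ιA ≤ 2)
    (hιB : Fintype.card ιB ≤ 2) (hρ : 0 ≤ ρ) (htr : ρ.trace = 1) (hM : ∀ x, M x ∈ Set.Icc 0 1)
    (hN : ∀ y, N y ∈ Set.Icc 0 1) : I3322Value ρ M N ≤ 1 / 4 :=
  mem_of_convex_of_forall_isStarProjection_mem (convex_setOf_I3322Value_le_left ρ N _)
    (fun _ hP => mem_of_convex_of_forall_isStarProjection_mem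
      (convex_setOf_I3322Value_le_right ρ _ _)
      (fun _ hQ => I3322Value_le_of_isStarProjection hιA hιB hρ htr hP hQ) hN) hM

theorem I3322Value_le_of_card_left_le_two (hιA : Fintype.card ιA ≤ 2) (hρ : 0 ≤ ρ)
    (htr : ρ.trace = 1) (hM : ∀ x, M x ∈ Set.Icc 0 1) (hN : ∀ y, N y ∈ Set.Icc 0 1) :
    I3322Value ρ M N ≤ 1 / 4 := by
  obtain ⟨ρ', hρ', hmarg, hjoint⟩ := exists_steering hρ
  choose N' hN' hNN' using fun y => hjoint (N y) (hN y)
  have htr' : ρ'.trace = 1 := by simpa only [one_kronecker_one, mul_one, htr] using (hmarg 1).symm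
  have hvalue : I3322Value ρ M N = I3322Value ρ' M N' := by
    simp only [I3322Value, margA, margB, jointP, hmarg, hNN']
  rw [hvalue]
  exact I3322Value_le_of_card_le_two_of_card_le_two hιA hιA hρ' htr' hM hN'

theorem I3322Value_submatrix_swap_one_sub (ρ : Matrix (ιA × ιB) (ιA × ιB) ℂ)
    (M : Fin 3 → Matrix ιA ιA ℂ) (N : Fin 3 → Matrix ιB ιB ℂ) :
    I3322Value (ρ.submatrix Prod.swap Prod.swap) (1 - N) (1 - M) = I3322Value ρ M N := by
  have hA (b : Matrix ιB ιB ℂ) : margA (ρ.submatrix Prod.swap Prod.swap) b = margB ρ b :=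
    congrArg _ (trace_submatrix_swap_mul_kronecker ρ 1 b)
  have hB (a : Matrix ιA ιA ℂ) : margB (ρ.submatrix Prod.swap Prod.swap) a = margA ρ a :=
    congrArg _ (trace_submatrix_swap_mul_kronecker ρ a 1)
  have hAB a b : jointP (ρ.submatrix Prod.swap Prod.swap) b a = jointP ρ a b :=
    congrArg _ (trace_submatrix_swap_mul_kronecker ρ a b)
  simp only [I3322Value, hA, hB, hAB]
  simp only [margA_eq_expectation, margB_eq_expectation, jointP_eq_expectation, Pi.sub_apply,
    Pi.one_apply, map_sub, map_one, mul_sub, sub_mul, mul_one, one_mul]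
  ring

theorem I3322_qubit_dimension_witness_general (hdim : Fintype.card ιA ≤ 2 ∨ Fintype.card ιB ≤ 2)
    (hρ : 0 ≤ ρ) (htr : ρ.trace = 1) (hM : ∀ x, M x ∈ Set.Icc 0 1) (hN : ∀ y, N y ∈ Set.Icc 0 1) :
    I3322Value ρ M N ≤ 1 / 4 := by
  obtain hιA | hιB := hdim
  · exact I3322Value_le_of_card_left_le_two hιA hρ htr hM hN
  · rw [← I3322Value_submatrix_swap_one_sub]
    refine I3322Value_le_of_card_left_le_two hιB
      ((nonneg_iff_posSemidef.1 hρ).submatrix _).nonneg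
      (((Equiv.prodComm ιB ιA).sum_comp fun p => ρ p p).trans htr) (fun y => ?_) (fun x => ?_)
    · exact Set.sub_mem_Icc_zero_iff_right.2 (hN y)
    · exact Set.sub_mem_Icc_zero_iff_right.2 (hM x)

end Witness

/-- I₃₃₂₂ ≤ 1/4 is a dimension witness for qutrits: if one of the local
dimensions is at most 2, the I₃₃₂₂ value is at most 1/4; hence any value exceeding 1/4
certifies local dimension at least 3 on both sides. -/
theorem I3322_qubit_dimension_witness
    {ιA ιB : Type*} [Fintype ιA] [Fintype ιB] [Nonempty ιA] [Nonempty ιB]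
    [DecidableEq ιA] [DecidableEq ιB]
    (hdim : Fintype.card ιA ≤ 2 ∨ Fintype.card ιB ≤ 2)
    (ρ : Matrix (ιA × ιB) (ιA × ιB) ℂ) (hρ : ρ.PosSemidef) (htr : Matrix.trace ρ = 1)
    (M : Fin 3 → Matrix ιA ιA ℂ) (N : Fin 3 → Matrix ιB ιB ℂ)
    (hM : ∀ x, (M x).IsHermitian ∧ M x * M x = M x)
    (hN : ∀ y, (N y).IsHermitian ∧ N y * N y = N y) :
    I3322Value ρ M N ≤ 1 / 4 :=
  open scoped MatrixOrder in
  I3322_qubit_dimension_witness_general hdim hρ.nonneg htr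
    (fun x => (IsStarProjection.mk (hM x).2 (hM x).1).mem_Icc)
    (fun y => (IsStarProjection.mk (hN y).2 (hN y).1).mem_Icc)
end
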